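/- arXiv:0907.4894 — 4 statements merged into one kernel-verified Lean document; each statement's English description precedes it below -/
import Mathlib

section
/- For every complex number s with Re(s) > 1, ∑_{n=1}^∞ a₂(n)/n^s = (1 + 2^{-2s} + 2·2^{-3s}) (1 - 2^{-s}) ζ(s)² (1 - 2^{-2s})^{-1} ζ(2s)^{-1}, where ζ is the Riemann zeta function. -/
/-- `a₂ n` is the number of Dirichlet characters `χ` modulo `n` with values in `ℂ`
satisfying `χ ^ 2 = 1`. -/
noncomputable def a₂ (n : ℕ) : ℕ := Nat.card {χ : DirichletCharacter ℂ n // χ ^ 2 = 1}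

theorem Nat.card_congr_sq_eq_one {G H : Type*} [Monoid G] [Monoid H] (e : G ≃* H) :
    Nat.card {x : G // x ^ 2 = 1} = Nat.card {y : H // y ^ 2 = 1} :=
  Nat.card_congr <| e.toEquiv.subtypeEquiv fun x => by
    rw [MulEquiv.toEquiv_eq_coe, EquivLike.coe_coe, ← map_pow, map_eq_one_iff e e.injective]

theorem Units.card_sq_eq_one (M : Type*) [Monoid M] :
    Nat.card {u : Mˣ // u ^ 2 = 1} = Nat.card {x : M // x ^ 2 = 1} :=
  Nat.card_congr
    { toFun := fun u => ⟨u.1, by rw [← Units.val_pow_eq_pow_val, u.2, Units.val_one]⟩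
      invFun := fun x => ⟨Units.ofPowEqOne x.1 2 x.2 two_ne_zero, Units.pow_ofPowEqOne _ _⟩
      left_inv := fun u => Subtype.ext (Units.ext rfl)
      right_inv := fun x => rfl }

theorem a₂_eq_card_sq_eq_one (n : ℕ) [NeZero n] : a₂ n = Nat.card {x : ZMod n // x ^ 2 = 1} := by
  obtain ⟨e⟩ := CommGroup.monoidHom_mulEquiv_of_hasEnoughRootsOfUnity (ZMod n)ˣ ℂ
  exact (Nat.card_congr_sq_eq_one (MulChar.mulEquivToUnitHom.trans e)).trans
    (Units.card_sq_eq_one (ZMod n))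

theorem a₂_one : a₂ 1 = 1 := by
  rw [a₂_eq_card_sq_eq_one, Nat.card_eq_fintype_card]
  decide

theorem a₂_mul_of_coprime {m n : ℕ} (h : m.Coprime n) (hm : m ≠ 0) (hn : n ≠ 0) :
    a₂ (m * n) = a₂ m * a₂ n := by
  have := NeZero.mk hm
  have := NeZero.mk hn
  rw [a₂_eq_card_sq_eq_one, a₂_eq_card_sq_eq_one, a₂_eq_card_sq_eq_one, ← Nat.card_prod,
    Nat.card_congr_sq_eq_one (ZMod.chineseRemainder h).toMulEquiv]
  refine Nat.card_congr (Equiv.trans (Equiv.subtypeEquivRight fun x => ?_)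
    (Equiv.subtypeProdEquivProd (p := fun x : ZMod m => x ^ 2 = 1)
      (q := fun x : ZMod n => x ^ 2 = 1)))
  rw [Prod.ext_iff]
  rfl

theorem a₂_odd_prime_pow {p : ℕ} (hp : p.Prime) (hp2 : p ≠ 2) {k : ℕ} (hk : k ≠ 0) :
    a₂ (p ^ k) = 2 := by
  have := NeZero.mk (pow_ne_zero k hp.ne_zero)
  have hp' : Prime (p : ℤ) := Nat.prime_iff_prime_int.mp hp
  have not_dvd_two : ¬ (p : ℤ) ∣ 2 := by
    exact_mod_cast fun h => hp2 ((Nat.prime_dvd_prime_iff_eq hp Nat.prime_two).mp h)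
  have cast_eq_zero (a : ℤ) : (a : ZMod (p ^ k)) = 0 ↔ (p : ℤ) ^ k ∣ a := by
    rw [ZMod.intCast_zmod_eq_zero_iff_dvd, Nat.cast_pow]
  have solutions : {x : ZMod (p ^ k) | x ^ 2 = 1} = {1, -1} := by
    ext x
    obtain ⟨a, rfl⟩ := ZMod.intCast_surjective x
    simp only [Set.mem_ofPred_eq, Set.mem_insert_iff, Set.mem_singleton_iff]
    refine ⟨fun h => ?_, by rintro (h | h) <;> simp [h]⟩
    have hdvd : (p : ℤ) ^ k ∣ (a - 1) * (a + 1) := by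
      rw [← cast_eq_zero]
      push_cast
      linear_combination h
    by_cases h1 : (p : ℤ) ∣ a - 1
    · left
      have h2 : ¬ (p : ℤ) ∣ a + 1 := fun h2 => not_dvd_two 
        (by simpa [add_sub_sub_cancel, one_add_one_eq_two] using dvd_sub h2 h1)
      have := (cast_eq_zero (a - 1)).mpr (hp'.pow_dvd_of_dvd_mul_right k h2 hdvd)
      push_cast at this
      linear_combination this
    · right
      have := (cast_eq_zero (a + 1)).mpr (hp'.pow_dvd_of_dvd_mul_left k h1 hdvd)
      push_cast at this
      linear_combination this
  have one_ne : (1 : ZMod (p ^ k)) ≠ -1 := fun h => not_dvd_two <|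
    (dvd_pow_self _ hk).trans <| (cast_eq_zero 2).mp (by push_cast; linear_combination h)
  rw [a₂_eq_card_sq_eq_one]
  exact (congrArg Set.ncard solutions).trans (Set.ncard_pair one_ne)

theorem a₂_two : a₂ 2 = 1 := by
  rw [a₂_eq_card_sq_eq_one, Nat.card_eq_fintype_card]
  decide

theorem a₂_four : a₂ 4 = 2 := by
  rw [a₂_eq_card_sq_eq_one, Nat.card_eq_fintype_card]
  decide

theorem a₂_two_pow_add_three (k : ℕ) : a₂ (2 ^ (k + 3)) = 4 := by
  have hcast (a : ℤ) : (a : ZMod (2 ^ (k + 3))) = 0 ↔ 8 * 2 ^ k ∣ a := by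
    rw [ZMod.intCast_zmod_eq_zero_iff_dvd, Nat.cast_pow, pow_add, mul_comm]
    norm_num
  have hpos : (0 : ℤ) < 2 ^ k := by positivity
  set h : ZMod (2 ^ (k + 3)) := ((4 * 2 ^ k : ℤ) : ZMod (2 ^ (k + 3))) with hdef
  have two_mul_h : 2 * h = 0 := by
    have := (hcast (2 * (4 * 2 ^ k))).mpr ⟨1, by ring⟩
    rw [hdef]
    exact_mod_cast this
  have h_sq : h ^ 2 = 0 := by
    have := (hcast ((4 * 2 ^ k) ^ 2)).mpr ⟨2 * 2 ^ k, by ring⟩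
    rw [hdef]
    exact_mod_cast this
  have h_ne : h ≠ 0 := fun h0 => by
    obtain ⟨c, hc⟩ := (hcast (4 * 2 ^ k)).mp h0
    have : (2 ^ k : ℤ) * (1 - 2 * c) = 0 := by linarith
    rcases mul_eq_zero.mp this with h | h <;> omega
  have two_ne : (2 : ZMod (2 ^ (k + 3))) ≠ 0 := fun h0 => by
    obtain ⟨c, hc⟩ := (hcast 2).mp (by exact_mod_cast h0)
    rw [mul_assoc] at hc
    omega
  have two_ne_h : (2 : ZMod (2 ^ (k + 3))) ≠ h := fun h0 => by
    obtain ⟨c, hc⟩ := (hcast (2 - 4 * 2 ^ k)).mp (by rw [Int.cast_sub, ← hdef, ← h0]; norm_num)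
    rw [mul_assoc] at hc
    omega
  have solutions : {x : ZMod (2 ^ (k + 3)) | x ^ 2 = 1} = {1, -1, 1 + h, -1 + h} := by
    ext x
    simp only [Set.mem_ofPred_eq, Set.mem_insert_iff, Set.mem_singleton_iff]
    constructor
    · obtain ⟨a, rfl⟩ := ZMod.intCast_surjective x
      intro ha
      have hdvd : (8 * 2 ^ k : ℤ) ∣ a ^ 2 - 1 := by
        rw [← hcast]
        push_cast
        linear_combination ha
      have hodd : Odd a := by
        by_contra hev
        obtain ⟨b, rfl⟩ := Int.not_odd_iff_even.mp hev
        obtain ⟨c, hc⟩ := hdvd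
        have : 2 * (2 * b ^ 2 - 4 * (2 ^ k * c)) = 1 := by linear_combination hc
        omega
      obtain ⟨b, rfl⟩ := hodd
      have hb : (2 : ℤ) ^ (k + 1) ∣ b * (b + 1) := by
        obtain ⟨c, hc⟩ := hdvd
        exact ⟨c, by rw [pow_succ]; linarith⟩
      have even_or_odd (c : ℤ) : (c : ZMod (2 ^ (k + 3))) * h = 0 ∨
          (c : ZMod (2 ^ (k + 3))) * h = h := by
        rcases Int.even_or_odd' c with ⟨d, rfl | rfl⟩ <;> push_cast
        · left; linear_combination (d : ZMod (2 ^ (k + 3))) * two_mul_h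
        · right; linear_combination (d : ZMod (2 ^ (k + 3))) * two_mul_h
      by_cases hb2 : (2 : ℤ) ∣ b
      · obtain ⟨c, hc⟩ := Int.prime_two.pow_dvd_of_dvd_mul_right (k + 1) (by omega) hb
        have hx : ((2 * b + 1 : ℤ) : ZMod (2 ^ (k + 3))) = 1 + c * h := by
          rw [hdef, hc]; push_cast; ring
        rcases even_or_odd c with h0 | h0 <;> rw [hx, h0] <;> simp
      · obtain ⟨c, hc⟩ := Int.prime_two.pow_dvd_of_dvd_mul_left (k + 1) hb2 hb
        have hx : ((2 * b + 1 : ℤ) : ZMod (2 ^ (k + 3))) = -1 + c * h := by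
          rw [hdef, show 2 * b + 1 = 2 * (b + 1) - 1 by ring, hc]; push_cast; ring
        rcases even_or_odd c with h0 | h0 <;> rw [hx, h0] <;> simp
    · rintro (rfl | rfl | rfl | rfl)
      · ring
      · ring
      · linear_combination two_mul_h + h_sq
      · linear_combination -two_mul_h + h_sq
  rw [a₂_eq_card_sq_eq_one]
  refine (congrArg Set.ncard solutions).trans ?_
  rw [Set.ncard_insert_of_notMem, Set.ncard_insert_of_notMem, Set.ncard_pair]
  · exact fun e => two_ne (by linear_combination e)
  · simp only [Set.mem_insert_iff, Set.mem_singleton_iff, not_or]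
    exact ⟨fun e => two_ne_h (by linear_combination -e - two_mul_h),
      fun e => h_ne (by linear_combination -e)⟩
  · simp only [Set.mem_insert_iff, Set.mem_singleton_iff, not_or]
    exact ⟨fun e => two_ne (by linear_combination e), fun e => h_ne (by linear_combination -e),
      fun e => two_ne_h (by linear_combination e)⟩

theorem a₂_prime_pow_le {p : ℕ} (hp : p.Prime) (k : ℕ) : a₂ (p ^ k) ≤ k + 1 := by
  rcases eq_or_ne k 0 with rfl | hk
  · simp [a₂_one]
  rcases eq_or_ne p 2 with rfl | hp2
  · match k with
    | 0 => contradiction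
    | 1 => simp [a₂_two]
    | 2 => simp [a₂_four]
    | k + 3 => rw [a₂_two_pow_add_three]; omega
  · rw [a₂_odd_prime_pow hp hp2 hk]
    omega

theorem a₂_le_sigma_zero {n : ℕ} (hn : n ≠ 0) : a₂ n ≤ ArithmeticFunction.sigma 0 n := by
  induction n using Nat.recOnPosPrimePosCoprime with
  | zero => contradiction
  | one => simp [a₂_one]
  | prime_pow p k hp hk =>
    rw [ArithmeticFunction.sigma_zero_apply_prime_pow hp]
    exact a₂_prime_pow_le hp k
  | coprime a b ha hb hab iha ihb =>
    rw [a₂_mul_of_coprime hab (by omega) (by omega),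
      ArithmeticFunction.isMultiplicative_sigma.map_mul_of_coprime hab]
    exact Nat.mul_le_mul (iha (by omega)) (ihb (by omega))

theorem LSeriesSummable_sigma_zero {s : ℂ} (hs : 1 < s.re) :
    LSeriesSummable (fun n => (ArithmeticFunction.sigma 0 n : ℂ)) s := by
  have hζ := ArithmeticFunction.LSeriesSummable_zeta_iff.mpr hs
  have := ArithmeticFunction.LSeriesSummable_mul
    (f := (ArithmeticFunction.zeta : ArithmeticFunction ℂ))
    (g := (ArithmeticFunction.zeta : ArithmeticFunction ℂ))
    (by simpa using hζ) (by simpa using hζ)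
  convert this using 2 with n
  rw [← ArithmeticFunction.zeta_mul_pow_eq_sigma, ArithmeticFunction.pow_zero_eq_zeta,
    ← ArithmeticFunction.natCoe_apply, ArithmeticFunction.natCoe_mul]

theorem LSeriesSummable_a₂ {s : ℂ} (hs : 1 < s.re) :
    LSeriesSummable (fun n => (a₂ n : ℂ)) s := by
  refine Summable.of_norm_bounded (LSeriesSummable_sigma_zero hs).norm fun n => ?_
  rcases eq_or_ne n 0 with rfl | hn
  · simp
  · exact LSeries.norm_term_le s (by simpa using a₂_le_sigma_zero hn)

theorem LSeries_term_pow (f : ℕ → ℂ) (s : ℂ) {p : ℕ} (hp : p ≠ 0) (k : ℕ) :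
    LSeries.term f s (p ^ k) = f (p ^ k) * ((p : ℂ) ^ (-s)) ^ k := by
  rw [LSeries.term_of_ne_zero (pow_ne_zero k hp), div_eq_mul_inv, ← Complex.cpow_neg,
    Nat.cast_pow, ← Complex.natCast_cpow_natCast_mul, Complex.cpow_nat_mul]

theorem norm_prime_cpow_neg_lt_one {s : ℂ} (hs : 1 < s.re) {p : ℕ} (hp : p.Prime) :
    ‖(p : ℂ) ^ (-s)‖ < 1 := by
  rw [Complex.norm_natCast_cpow_of_pos hp.pos]
  exact Real.rpow_lt_one_of_one_lt_of_neg (mod_cast hp.one_lt) (by simp; linarith)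

theorem hasSum_a₂_odd_prime_pow {p : ℕ} (hp : p.Prime) (hp2 : p ≠ 2) {x : ℂ} (hx : ‖x‖ < 1) :
    HasSum (fun k => (a₂ (p ^ k) : ℂ) * x ^ k) ((1 + x) * (1 - x)⁻¹) := by
  have hne : 1 - x ≠ 0 := sub_ne_zero.mpr fun h => by simp [← h] at hx
  have tail : (fun k => (a₂ (p ^ (k + 1)) : ℂ) * x ^ (k + 1)) = fun k => 2 * x * x ^ k := by
    funext k
    rw [a₂_odd_prime_pow hp hp2 k.succ_ne_zero]
    push_cast
    ring
  have value : (1 + x) * (1 - x)⁻¹ - ∑ k ∈ Finset.range 1, (a₂ (p ^ k) : ℂ) * x ^ k =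
      2 * x * (1 - x)⁻¹ := by
    simp only [Finset.sum_range_one, pow_zero, a₂_one]
    field_simp
    push_cast
    ring
  rw [← hasSum_nat_add_iff' 1, tail, value]
  exact (hasSum_geometric_of_norm_lt_one hx).mul_left (2 * x)

theorem hasSum_a₂_two_pow {x : ℂ} (hx : ‖x‖ < 1) :
    HasSum (fun k => (a₂ (2 ^ k) : ℂ) * x ^ k) ((1 + x ^ 2 + 2 * x ^ 3) * (1 - x)⁻¹) := by
  have hne : 1 - x ≠ 0 := sub_ne_zero.mpr fun h => by simp [← h] at hx
  have tail : (fun k => (a₂ (2 ^ (k + 3)) : ℂ) * x ^ (k + 3)) = fun k => 4 * x ^ 3 * x ^ k := by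
    funext k
    rw [a₂_two_pow_add_three]
    push_cast
    ring
  have value : (1 + x ^ 2 + 2 * x ^ 3) * (1 - x)⁻¹ -
      ∑ k ∈ Finset.range 3, (a₂ (2 ^ k) : ℂ) * x ^ k = 4 * x ^ 3 * (1 - x)⁻¹ := by
    simp only [Finset.sum_range_succ, Finset.sum_range_zero, pow_zero, a₂_one, pow_one, a₂_two,
      show 2 ^ 2 = 4 from rfl, a₂_four]
    field_simp
    push_cast
    ring
  rw [← hasSum_nat_add_iff' 3, tail, value]
  exact (hasSum_geometric_of_norm_lt_one hx).mul_left (4 * x ^ 3)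

theorem a₂_eulerProduct_hasProd {s : ℂ} (hs : 1 < s.re) :
    HasProd (fun p : Nat.Primes => ∑' k, (a₂ (p ^ k) : ℂ) * ((p : ℂ) ^ (-s)) ^ k)
      (LSeries (fun n => (a₂ n : ℂ)) s) := by
  have h := EulerProduct.eulerProduct_hasProd (f := LSeries.term (fun n => (a₂ n : ℂ)) s)
    (by simp [a₂_one]) (fun {m n} hmn => ?_) (LSeriesSummable_a₂ hs).norm (LSeries.term_zero _ _)
  · have factor (p : Nat.Primes) (k : ℕ) :=
      LSeries_term_pow (fun n => (a₂ n : ℂ)) s p.2.ne_zero k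
    simp only [factor] at h
    exact h
  · rcases eq_or_ne m 0 with rfl | hm
    · simp
    rcases eq_or_ne n 0 with rfl | hn
    · simp
    rw [LSeries.term_of_ne_zero (mul_ne_zero hm hn), LSeries.term_of_ne_zero hm,
      LSeries.term_of_ne_zero hn, a₂_mul_of_coprime hmn hm hn, Nat.cast_mul, Nat.cast_mul,
      Complex.natCast_mul_natCast_cpow, mul_div_mul_comm]

theorem a₂_LSeries_eq (s : ℂ) (hs : 1 < s.re) :
    LSeries (fun n => (a₂ n : ℂ)) s =
      (1 + (2 : ℂ) ^ (-(2 * s)) + 2 * (2 : ℂ) ^ (-(3 * s))) * (1 - (2 : ℂ) ^ (-s)) *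
        riemannZeta s ^ 2 * (1 - (2 : ℂ) ^ (-(2 * s)))⁻¹ * (riemannZeta (2 * s))⁻¹ := by
  have hs2 : 1 < (2 * s).re := by
    rw [show (2 * s).re = 2 * s.re by simp]
    linarith
  have cpow_nat_mul (p k : ℕ) : (p : ℂ) ^ (-(k * s)) = ((p : ℂ) ^ (-s)) ^ k := by
    rw [← Complex.cpow_nat_mul, mul_neg]
  have cpow_two_mul (p : ℕ) : (p : ℂ) ^ (-(2 * s)) = ((p : ℂ) ^ (-s)) ^ 2 := by
    exact_mod_cast cpow_nat_mul p 2
  set c : ℂ := (1 + (2 : ℂ) ^ (-(2 * s)) + 2 * (2 : ℂ) ^ (-(3 * s))) * (1 - (2 : ℂ) ^ (-s)) *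
    (1 - (2 : ℂ) ^ (-(2 * s)))⁻¹ with hc
  let two : Nat.Primes := ⟨2, Nat.prime_two⟩
  have lhs := (a₂_eulerProduct_hasProd hs).mul (riemannZeta_eulerProduct_hasProd hs2)
  have rhs := ((riemannZeta_eulerProduct_hasProd hs).mul
    (riemannZeta_eulerProduct_hasProd hs)).mul (hasProd_ite_eq two c)
  have key : LSeries (fun n => (a₂ n : ℂ)) s * riemannZeta (2 * s) =
      riemannZeta s * riemannZeta s * c := by
    refine lhs.unique ?_
    convert rhs using 2 with p
    have hx := norm_prime_cpow_neg_lt_one hs p.2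
    have hne : 1 - (p : ℂ) ^ (-s) ≠ 0 := sub_ne_zero.mpr fun h => by simp [← h] at hx
    have hne' : 1 + (p : ℂ) ^ (-s) ≠ 0 := fun h => by
      simp [eq_neg_of_add_eq_zero_right h] at hx
    have hfactor : 1 - ((p : ℂ) ^ (-s)) ^ 2 = (1 - (p : ℂ) ^ (-s)) * (1 + (p : ℂ) ^ (-s)) := by
      ring
    rw [cpow_two_mul p]
    split_ifs with hp
    · subst hp
      have h3 := cpow_nat_mul 2 3
      have h2 := cpow_two_mul 2
      push_cast [two] at *
      rw [(hasSum_a₂_two_pow hx).tsum_eq, hc, h3, h2, hfactor]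
      field_simp
    · have hp2 : (p : ℕ) ≠ 2 := fun h => hp (Subtype.ext h)
      rw [(hasSum_a₂_odd_prime_pow p.2 hp2 hx).tsum_eq, hfactor]
      field_simp
  rw [eq_mul_inv_iff_mul_eq₀ (riemannZeta_ne_zero_of_one_lt_re hs2), key, hc]
  ring
end

section
/- For every complex number s with Re(s) > 1, ∑_{n=1}^∞ b₂(n)/n^s = (1 + 2^{-2s} + 2·2^{-3s}) (1 - 2^{-s}) ζ(s) (1 - 2^{-2s})^{-1} ζ(2s)^{-1}, where ζ is the Riemann zeta function. -/
/-- `b₂ n` is the number of primitive Dirichlet characters `χ` modulo `n` with values in `ℂ`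
satisfying `χ ^ 2 = 1`. -/
noncomputable def b₂ (n : ℕ) : ℕ :=
  Nat.card {χ : DirichletCharacter ℂ n // χ.IsPrimitive ∧ χ ^ 2 = 1}

/-- The number of square roots of unity in `ZMod n`. -/
noncomputable def sqrtOneCount (n : ℕ) : ℕ := Nat.card {x : ZMod n // x ^ 2 = 1}

lemma sqrtOneCount_mul {m n : ℕ} (h : m.Coprime n) :
    sqrtOneCount (m * n) = sqrtOneCount m * sqrtOneCount n := by
  unfold sqrtOneCount
  rw [← Nat.card_prod]
  refine Nat.card_congr (((ZMod.chineseRemainder h).toEquiv.subtypeEquiv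
    (q := fun x => x.1 ^ 2 = 1 ∧ x.2 ^ 2 = 1) fun x => ?_).trans
    (Equiv.subtypeProdEquivProd (p := fun x : ZMod m => x ^ 2 = 1)
      (q := fun x : ZMod n => x ^ 2 = 1)))
  rw [← (ZMod.chineseRemainder h).injective.eq_iff]
  simp [Prod.ext_iff]

lemma sqrtOneCount_one : sqrtOneCount 1 = 1 := by
  have : Unique {x : ZMod 1 // x ^ 2 = 1} := ⟨⟨1, one_pow 2⟩, fun x => Subsingleton.elim _ _⟩
  exact Nat.card_unique

lemma sqrtOneCount_two : sqrtOneCount 2 = 1 := by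
  rw [sqrtOneCount, Nat.card_eq_fintype_card]
  decide

lemma sqrtOneCount_four : sqrtOneCount 4 = 2 := by
  rw [sqrtOneCount, Nat.card_eq_fintype_card]
  decide

lemma sqrtOneCount_odd_prime_pow {p k : ℕ} (hp : p.Prime) (hp2 : p ≠ 2) (hk : k ≠ 0) :
    sqrtOneCount (p ^ k) = 2 := by
  have hp' : Prime (p : ℤ) := Nat.prime_iff_prime_int.mp hp
  have hp3 : 2 < p := lt_of_le_of_ne hp.two_le hp2.symm
  have hne : (1 : ZMod (p ^ k)) ≠ -1 := by
    have : Fact (2 < p ^ k) := ⟨hp3.trans_le (Nat.le_self_pow hk p)⟩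
    exact ZMod.neg_one_ne_one.symm
  have hset : {x : ZMod (p ^ k) | x ^ 2 = 1} = {1, -1} := by
    ext x
    simp only [Set.mem_ofPred_eq, Set.mem_insert_iff, Set.mem_singleton_iff]
    refine ⟨fun hx => ?_, by rintro (rfl | rfl) <;> simp⟩
    obtain ⟨a, rfl⟩ := ZMod.intCast_surjective x
    have hdvd : ((p : ℤ) ^ k) ∣ (a - 1) * (a + 1) := by
      have := (ZMod.intCast_zmod_eq_zero_iff_dvd ((a - 1) * (a + 1)) (p ^ k)).mp
        (by push_cast; linear_combination hx)
      simpa using this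
    have cast_eq {b : ℤ} (hb : ((p : ℤ) ^ k) ∣ b) : (b : ZMod (p ^ k)) = 0 :=
      (ZMod.intCast_zmod_eq_zero_iff_dvd b (p ^ k)).mpr (by simpa using hb)
    by_cases h1 : (p : ℤ) ∣ a - 1
    · have h2 : ¬ (p : ℤ) ∣ a + 1 := fun h2 => by
        have := Int.le_of_dvd two_pos ((by ring : (a + 1) - (a - 1) = 2) ▸ dvd_sub h2 h1)
        omega
      have := cast_eq (hp'.pow_dvd_of_dvd_mul_right k h2 hdvd)
      push_cast at this
      exact Or.inl (by linear_combination this)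
    · have := cast_eq (hp'.pow_dvd_of_dvd_mul_left k h1 hdvd)
      push_cast at this
      exact Or.inr (by linear_combination this)
  change Nat.card ({x : ZMod (p ^ k) | x ^ 2 = 1} : Set _) = 2
  rw [Nat.card_coe_set_eq, hset, Set.ncard_pair hne]

lemma sqrtOneCount_two_pow (m : ℕ) : sqrtOneCount (2 ^ (m + 3)) = 4 := by
  set t := 2 ^ m with ht
  have htpos : 0 < t := by positivity
  have hn : 2 ^ (m + 3) = 8 * t := by rw [ht]; ring
  have ht0 : ((8 * t : ℕ) : ZMod (8 * t)) = 0 := ZMod.natCast_self _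
  have hset : {x : ZMod (8 * t) | x ^ 2 = 1} =
      (fun a : ℕ => (a : ZMod (8 * t))) '' ({1, 4 * t - 1, 4 * t + 1, 8 * t - 1} : Finset ℕ) := by
    have c1 : ((4 * t - 1 : ℕ) : ZMod (8 * t)) = 4 * t - 1 := by
      rw [Nat.cast_sub (by omega)]; push_cast; ring
    have c2 : ((8 * t - 1 : ℕ) : ZMod (8 * t)) = - 1 := by
      rw [Nat.cast_sub (by omega), ht0]; push_cast; ring
    push_cast at ht0
    ext x
    simp only [Set.mem_ofPred_eq, Finset.coe_insert, Finset.coe_singleton, Set.image_insert_eq,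
      Set.image_singleton, Set.mem_insert_iff, Set.mem_singleton_iff, c1, c2]
    push_cast
    constructor
    · intro hx
      obtain ⟨a, rfl⟩ := ZMod.intCast_surjective x
      have hdvd : (8 * t : ℤ) ∣ a ^ 2 - 1 := by
        have := (ZMod.intCast_zmod_eq_zero_iff_dvd (a ^ 2 - 1) (8 * t)).mp
          (by push_cast; linear_combination hx)
        simpa using this
      have hodd : Odd a := by
        by_contra h
        obtain ⟨b, rfl⟩ := Int.not_odd_iff_even.mp h
        obtain ⟨c, hc⟩ := hdvd
        have : 2 * (2 * b ^ 2 - 4 * t * c) = 1 := by linear_combination hc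
        omega
      obtain ⟨b, rfl⟩ := hodd
      have hdvd' : (2 : ℤ) ^ (m + 1) ∣ b * (b + 1) := by
        obtain ⟨c, hc⟩ := hdvd
        refine ⟨c, ?_⟩
        rw [ht] at hc
        push_cast at hc
        have : 4 * (b * (b + 1)) = 4 * (2 ^ (m + 1) * c) := by linear_combination hc
        omega
      by_cases hb : (2 : ℤ) ∣ b
      · have hb' : ¬ (2 : ℤ) ∣ b + 1 := by omega
        obtain ⟨c, rfl⟩ := Int.prime_two.pow_dvd_of_dvd_mul_right _ hb' hdvd'
        rcases Int.even_or_odd' c with ⟨d, rfl | rfl⟩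
        · left
          rw [ht] at ht0 ⊢
          push_cast at ht0 ⊢
          linear_combination d * ht0
        · right; right; left
          rw [ht] at ht0 ⊢
          push_cast at ht0 ⊢
          linear_combination d * ht0
      · obtain ⟨c, hc⟩ := Int.prime_two.pow_dvd_of_dvd_mul_left _ hb hdvd'
        obtain rfl : b = 2 ^ (m + 1) * c - 1 := by omega
        rcases Int.even_or_odd' c with ⟨d, rfl | rfl⟩
        · right; right; right
          rw [ht] at ht0 ⊢
          push_cast at ht0 ⊢
          linear_combination d * ht0
        · right; left
          rw [ht] at ht0 ⊢
          push_cast at ht0 ⊢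
          linear_combination d * ht0
    · rintro (rfl | rfl | rfl | rfl)
      · ring
      · linear_combination (2 * t - 1) * ht0
      · linear_combination (2 * t + 1) * ht0
      · ring
  rw [hn]
  change Nat.card ({x : ZMod (8 * t) | x ^ 2 = 1} : Set _) = 4
  rw [Nat.card_coe_set_eq, hset, Set.InjOn.ncard_image, Set.ncard_coe_finset]
  · rw [Finset.card_insert_of_notMem, Finset.card_insert_of_notMem, Finset.card_insert_of_notMem,
      Finset.card_singleton] <;> simp <;> omega
  · intro a ha b hb hab
    have hlt {c : ℕ} (hc : c ∈ (({1, 4 * t - 1, 4 * t + 1, 8 * t - 1} : Finset ℕ) : Set ℕ)) :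
        c < 8 * t := by
      simp at hc; omega
    have := (ZMod.natCast_eq_natCast_iff' a b _).mp hab
    rwa [Nat.mod_eq_of_lt (hlt ha), Nat.mod_eq_of_lt (hlt hb)] at this

lemma card_sq_eq_one_eq_sqrtOneCount (n : ℕ) [NeZero n] :
    Nat.card {χ : DirichletCharacter ℂ n // χ ^ 2 = 1} = sqrtOneCount n := by
  obtain ⟨e⟩ := MulChar.mulEquiv_units (ZMod n) ℂ
  refine (Nat.card_congr (e.toEquiv.subtypeEquiv (q := fun x => x ^ 2 = 1) fun χ => ?_)).trans
    (Nat.card_congr ⟨fun x => ⟨x.1, by simpa [Units.ext_iff] using x.2⟩,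
      fun x => ⟨Units.ofPowEqOne x.1 2 x.2 two_ne_zero, by ext; simp⟩, fun x => by ext; simp, fun x => by ext; simp⟩)
  rw [← e.injective.eq_iff]
  simp

open DirichletCharacter in
lemma card_conductor_eq {d n : ℕ} [NeZero n] (hd : d ∣ n) :
    Nat.card {χ : DirichletCharacter ℂ n // χ ^ 2 = 1 ∧ χ.conductor = d} = b₂ d := by
  symm
  refine Nat.card_congr (Equiv.ofBijective
    (fun χ => ⟨changeLevel hd χ.1, by rw [← map_pow, χ.2.2, map_one], by
      rw [conductor_changeLevel]; exact χ.2.1⟩) ⟨fun χ ψ h => ?_, ?_⟩)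
  · exact Subtype.ext (changeLevel_injective hd (congrArg Subtype.val h))
  · rintro ⟨χ, hχ, rfl⟩
    refine ⟨⟨χ.primitiveCharacter, χ.primitiveCharacter_isPrimitive, ?_⟩,
      Subtype.ext χ.changeLevel_primitiveCharacter⟩
    apply changeLevel_injective hd
    rw [map_pow, changeLevel_primitiveCharacter, hχ, map_one]

lemma sum_divisors_b₂ {n : ℕ} (hn : n ≠ 0) : ∑ d ∈ n.divisors, b₂ d = sqrtOneCount n := by
  classical
  have : NeZero n := ⟨hn⟩
  rw [← card_sq_eq_one_eq_sqrtOneCount]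
  have : Fintype (DirichletCharacter ℂ n) := Fintype.ofFinite _
  rw [Nat.card_eq_fintype_card, Fintype.card_subtype,
    Finset.card_eq_sum_card_fiberwise (f := DirichletCharacter.conductor) (t := n.divisors)
      fun χ _ => by simp [hn, χ.conductor_dvd_level]]
  refine Finset.sum_congr rfl fun d hd => ?_
  rw [← card_conductor_eq (Nat.dvd_of_mem_divisors hd), Nat.card_eq_fintype_card,
    Fintype.card_subtype, Finset.filter_filter]

lemma b₂_prime_pow_succ {p : ℕ} (hp : p.Prime) (k : ℕ) :
    b₂ (p ^ (k + 1)) + sqrtOneCount (p ^ k) = sqrtOneCount (p ^ (k + 1)) := by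
  rw [← sum_divisors_b₂ (pow_ne_zero _ hp.ne_zero), ← sum_divisors_b₂ (pow_ne_zero _ hp.ne_zero),
    Nat.sum_divisors_prime_pow hp, Nat.sum_divisors_prime_pow hp, Finset.sum_range_succ _ (k + 1),
    add_comm]

lemma b₂_one : b₂ 1 = 1 := by
  simpa [sqrtOneCount_one] using sum_divisors_b₂ one_ne_zero

lemma b₂_odd_prime {p : ℕ} (hp : p.Prime) (hp2 : p ≠ 2) : b₂ p = 1 := by
  have := b₂_prime_pow_succ hp 0
  rw [zero_add, sqrtOneCount_odd_prime_pow hp hp2 one_ne_zero, pow_zero, sqrtOneCount_one,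
    pow_one] at this
  omega

lemma b₂_odd_prime_pow {p : ℕ} (hp : p.Prime) (hp2 : p ≠ 2) (k : ℕ) : b₂ (p ^ (k + 2)) = 0 := by
  have := b₂_prime_pow_succ hp (k + 1)
  rw [sqrtOneCount_odd_prime_pow hp hp2 (by omega),
    sqrtOneCount_odd_prime_pow hp hp2 (by omega)] at this
  simpa using this

lemma b₂_two : b₂ 2 = 0 := by
  have := b₂_prime_pow_succ Nat.prime_two 0
  norm_num [sqrtOneCount_one, sqrtOneCount_two] at this
  exact this

lemma b₂_four : b₂ 4 = 1 := by
  have := b₂_prime_pow_succ Nat.prime_two 1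
  norm_num [sqrtOneCount_two, sqrtOneCount_four] at this
  omega

lemma b₂_eight : b₂ 8 = 2 := by
  have := b₂_prime_pow_succ Nat.prime_two 2
  have h8 := sqrtOneCount_two_pow 0
  norm_num [sqrtOneCount_four] at this h8
  omega

lemma b₂_two_pow (k : ℕ) : b₂ (2 ^ (k + 4)) = 0 := by
  have := b₂_prime_pow_succ Nat.prime_two (k + 3)
  rw [sqrtOneCount_two_pow, show k + 3 + 1 = (k + 1) + 3 by ring, sqrtOneCount_two_pow] at this
  simpa using this

open ArithmeticFunction in
lemma b₂_mul {m n : ℕ} (h : m.Coprime n) : b₂ (m * n) = b₂ m * b₂ n := by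
  let q : ArithmeticFunction ℤ := ⟨fun n => if n = 0 then 0 else sqrtOneCount n, if_pos rfl⟩
  have hq : q.IsMultiplicative := by
    refine IsMultiplicative.iff_ne_zero.mpr ⟨by simp [q, sqrtOneCount_one], fun hm hn hmn => ?_⟩
    simp [q, hm, hn, sqrtOneCount_mul hmn]
  have hf : (moebius * q).IsMultiplicative := isMultiplicative_moebius.mul hq
  have hb {k : ℕ} (hk : k ≠ 0) : (moebius * q) k = b₂ k := by
    have := (sum_eq_iff_sum_mul_moebius_eq (f := fun n => (b₂ n : ℤ))
      (g := fun n => (sqrtOneCount n : ℤ))).mp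
        (fun n hn => mod_cast sum_divisors_b₂ hn.ne') k (Nat.pos_of_ne_zero hk)
    rw [← this, mul_apply]
    refine Finset.sum_congr rfl fun x hx => ?_
    simp [q, Nat.ne_zero_of_mem_divisorsAntidiagonal hx]
  rcases eq_or_ne m 0 with rfl | hm
  · obtain rfl : n = 1 := by simpa using h
    simp [b₂_one]
  rcases eq_or_ne n 0 with rfl | hn
  · obtain rfl : m = 1 := by simpa using h
    simp [b₂_one]
  have := hf.map_mul_of_coprime h
  rw [hb hm, hb hn, hb (mul_ne_zero hm hn)] at this
  exact_mod_cast this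

lemma b₂_two_pow_le (k : ℕ) : b₂ (2 ^ k) ≤ 2 := by
  match k with
  | 0 => simp [b₂_one]
  | 1 => simp [b₂_two]
  | 2 => norm_num [b₂_four]
  | 3 => norm_num [b₂_eight]
  | k + 4 => simp [b₂_two_pow]

lemma b₂_le_one_of_odd (n : ℕ) : Odd n → b₂ n ≤ 1 := by
  induction n using Nat.recOnPosPrimePosCoprime with
  | zero => simp
  | one => simp [b₂_one]
  | prime_pow p k hp hk =>
    intro h
    have hp2 : p ≠ 2 := by
      rintro rfl
      exact absurd h (by simp [hk.ne', parity_simps])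
    match k with
    | 1 => simp [b₂_odd_prime hp hp2]
    | k + 2 => simp [b₂_odd_prime_pow hp hp2]
  | coprime a b _ _ hab iha ihb =>
    intro h
    rw [Nat.odd_mul] at h
    rw [b₂_mul hab]
    exact Nat.mul_le_mul (iha h.1) (ihb h.2)

lemma b₂_le_two {n : ℕ} (hn : n ≠ 0) : b₂ n ≤ 2 := by
  obtain ⟨k, m, hm, rfl⟩ := Nat.exists_eq_two_pow_mul_odd hn
  rw [b₂_mul (Nat.Coprime.pow_left k hm.coprime_two_left)]
  exact Nat.mul_le_mul (b₂_two_pow_le k) (b₂_le_one_of_odd m hm)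

lemma b₂_LSeries_hasProd {s : ℂ} (hs : 1 < s.re) :
    HasProd (fun p : Nat.Primes => ∑' e, LSeries.term (fun n => (b₂ n : ℂ)) s (p ^ e))
      (LSeries (fun n => (b₂ n : ℂ)) s) := by
  refine EulerProduct.eulerProduct_hasProd (by simp [LSeries.term, b₂_one]) (fun {m n} h => ?_)
    (LSeriesSummable_of_bounded_of_one_lt_re (m := 2) (fun n hn => ?_) hs).norm
    (LSeries.term_zero _ _)
  · rcases eq_or_ne m 0 with rfl | hm
    · simp
    rcases eq_or_ne n 0 with rfl | hn
    · simp
    rw [LSeries.term_of_ne_zero (mul_ne_zero hm hn), LSeries.term_of_ne_zero hm,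
      LSeries.term_of_ne_zero hn, b₂_mul h, Nat.cast_mul, Nat.cast_mul,
      Complex.natCast_mul_natCast_cpow, mul_div_mul_comm]
  · rw [Complex.norm_natCast]
    exact_mod_cast b₂_le_two hn

lemma LSeries_term_prime_pow (f : ℕ → ℂ) (s : ℂ) {p : ℕ} (hp : p.Prime) (e : ℕ) :
    LSeries.term f s (p ^ e) = f (p ^ e) * ((p : ℂ) ^ (-s)) ^ e := by
  rw [LSeries.term_of_ne_zero (pow_ne_zero _ hp.ne_zero), Complex.cpow_neg, inv_pow,
    div_eq_mul_inv]
  congr 2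
  induction e with
  | zero => simp
  | succ e ih => rw [pow_succ, Nat.cast_mul, Complex.natCast_mul_natCast_cpow, ih, pow_succ]

lemma tsum_b₂_odd_prime (s : ℂ) {p : ℕ} (hp : p.Prime) (hp2 : p ≠ 2) :
    ∑' e, LSeries.term (fun n => (b₂ n : ℂ)) s (p ^ e) = 1 + (p : ℂ) ^ (-s) := by
  rw [tsum_eq_sum (s := Finset.range 2)]
  · simp [Finset.sum_range_succ, LSeries_term_prime_pow _ s hp, b₂_one, b₂_odd_prime hp hp2]
  · intro e he
    obtain ⟨k, rfl⟩ := Nat.exists_eq_add_of_le' (not_lt.mp (Finset.mem_range.not.mp he))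
    simp [LSeries_term_prime_pow _ s hp, b₂_odd_prime_pow hp hp2]

lemma tsum_b₂_two (s : ℂ) :
    ∑' e, LSeries.term (fun n => (b₂ n : ℂ)) s (2 ^ e) =
      1 + ((2 : ℂ) ^ (-s)) ^ 2 + 2 * ((2 : ℂ) ^ (-s)) ^ 3 := by
  rw [tsum_eq_sum (s := Finset.range 4)]
  · simp only [LSeries_term_prime_pow _ s Nat.prime_two]
    norm_num [Finset.sum_range_succ, b₂_one, b₂_two, b₂_four, b₂_eight]
  · intro e he
    obtain ⟨k, rfl⟩ := Nat.exists_eq_add_of_le' (not_lt.mp (Finset.mem_range.not.mp he))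
    rw [LSeries_term_prime_pow _ s Nat.prime_two, b₂_two_pow, Nat.cast_zero, zero_mul]

lemma prime_cpow_neg_norm_lt_one {s : ℂ} (hs : 0 < s.re) {p : ℕ} (hp : p.Prime) :
    ‖(p : ℂ) ^ (-s)‖ < 1 := by
  rw [Complex.norm_natCast_cpow_of_pos hp.pos]
  exact Real.rpow_lt_one_of_one_lt_of_neg (mod_cast hp.one_lt) (by simpa using hs)

theorem b₂_LSeries_eq (s : ℂ) (hs : 1 < s.re) :
    LSeries (fun n => (b₂ n : ℂ)) s =
      (1 + (2 : ℂ) ^ (-(2 * s)) + 2 * (2 : ℂ) ^ (-(3 * s))) * (1 - (2 : ℂ) ^ (-s)) *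
        riemannZeta s * (1 - (2 : ℂ) ^ (-(2 * s)))⁻¹ * (riemannZeta (2 * s))⁻¹ := by
  have hs2 : 1 < (2 * s).re := by simp; linarith
  have hpow (x : ℂ) (k : ℕ) : x ^ (-(k * s)) = (x ^ (-s)) ^ k := by
    rw [← Complex.cpow_nat_mul, mul_neg]
  have h2 (x : ℂ) : x ^ (-(2 * s)) = (x ^ (-s)) ^ 2 := mod_cast hpow x 2
  have h3 (x : ℂ) : x ^ (-(3 * s)) = (x ^ (-s)) ^ 3 := mod_cast hpow x 3
  have hne {p : ℕ} (hp : p.Prime) :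
      1 - (p : ℂ) ^ (-s) ≠ 0 ∧ 1 - ((p : ℂ) ^ (-s)) ^ 2 ≠ 0 := by
    have hlt := prime_cpow_neg_norm_lt_one (zero_lt_one.trans hs) hp
    have hlt2 : ‖((p : ℂ) ^ (-s)) ^ 2‖ < 1 := by
      rw [norm_pow]; exact pow_lt_one₀ (norm_nonneg _) hlt two_ne_zero
    refine ⟨fun h => ?_, fun h => ?_⟩
    · rw [← sub_eq_zero.mp h] at hlt; simp at hlt
    · rw [← sub_eq_zero.mp h] at hlt2; simp at hlt2
  set C : ℂ := (1 + (2 : ℂ) ^ (-(2 * s)) + 2 * (2 : ℂ) ^ (-(3 * s))) * (1 - (2 : ℂ) ^ (-s)) *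
    (1 - (2 : ℂ) ^ (-(2 * s)))⁻¹ with hC
  have hprod := (b₂_LSeries_hasProd hs).mul (riemannZeta_eulerProduct_hasProd hs2)
  have hprod' := (riemannZeta_eulerProduct_hasProd hs).mul
    (hasProd_ite_eq (⟨2, Nat.prime_two⟩ : Nat.Primes) C)
  have key : LSeries (fun n => (b₂ n : ℂ)) s * riemannZeta (2 * s) = riemannZeta s * C := by
    refine hprod.unique ?_
    convert! hprod' using 2 with p
    obtain ⟨hp1, hp2⟩ := hne p.2
    split_ifs with h
    · subst h
      have h1 : 1 - (2 : ℂ) ^ (-s) ≠ 0 := mod_cast hp1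
      have := tsum_b₂_two s
      push_cast
      rw [this, hC, h2, h3]
      field_simp
    · rw [tsum_b₂_odd_prime s p.2 fun h' => h (Subtype.ext h'), h2]
      field_simp
      ring
  rw [eq_mul_inv_iff_mul_eq₀ (riemannZeta_ne_zero_of_one_lt_re hs2), key, hC]
  ring
end

section
/- As real s → 1 from the right, (s - 1) · ∏_{p prime, p ≡ 1 (mod 3)} (1 - p^{-s})^{-2} converges to (√3/(2π)) · ∏_{p prime, p ≡ 1 (mod 3)} (1 - p^{-2})^{-1}. -/
open Filter Topology

/-- The primitive quadratic Dirichlet character modulo `3`, with real values. -/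
noncomputable def quadraticCharModThree : DirichletCharacter ℝ 3 :=
  (quadraticChar (ZMod 3)).ringHomComp (Int.castRingHom ℝ)

lemma quadraticCharModThree_zero : quadraticCharModThree 0 = 0 :=
  MulChar.map_zero _

lemma quadraticCharModThree_one : quadraticCharModThree 1 = 1 :=
  map_one _

lemma quadraticCharModThree_two : quadraticCharModThree 2 = -1 := by
  have h : quadraticChar (ZMod 3) 2 = -1 := by decide
  simp [quadraticCharModThree, MulChar.ringHomComp_apply, h]

lemma natCast_zmod_three_eq {n r : ℕ} (h : n % 3 = r) : (n : ZMod 3) = r := by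
  rw [← h, ZMod.natCast_mod]

lemma summable_norm_char_mul_rpow {N : ℕ} (χ : DirichletCharacter ℝ N) {s : ℝ} (hs : 1 < s) :
    Summable fun n : ℕ ↦ ‖χ n * (n : ℝ) ^ (-s)‖ := by
  refine (Real.summable_nat_rpow.mpr (by linarith : -s < -1)).of_nonneg_of_le
    (fun _ ↦ norm_nonneg _) fun n ↦ ?_
  rw [norm_mul, Real.norm_of_nonneg (Real.rpow_nonneg n.cast_nonneg _)]
  exact mul_le_of_le_one_left (Real.rpow_nonneg n.cast_nonneg _) (χ.norm_le_one _)

/-- The Euler product of the Dirichlet series of a real character at a real point `s > 1`. -/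
lemma hasProd_one_sub_char_mul_rpow_inv {N : ℕ} (χ : DirichletCharacter ℝ N) {s : ℝ}
    (hs : 1 < s) :
    HasProd (fun p : Nat.Primes ↦ (1 - χ (p : ℕ) * (p : ℝ) ^ (-s))⁻¹)
      (∑' n : ℕ, χ n * (n : ℝ) ^ (-s)) := by
  let f : ℕ →*₀ ℝ :=
    { toFun n := χ n * (n : ℝ) ^ (-s)
      map_zero' := by simp [Real.zero_rpow (by linarith : -s ≠ 0)]
      map_one' := by simp
      map_mul' m n := by
        push_cast
        rw [map_mul, Real.mul_rpow m.cast_nonneg n.cast_nonneg]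
        ring }
  exact EulerProduct.eulerProduct_completely_multiplicative_hasProd (f := f)
    (summable_norm_char_mul_rpow χ hs)

lemma hasProd_one_sub_rpow_inv {s : ℝ} (hs : 1 < s) :
    HasProd (fun p : Nat.Primes ↦ (1 - (p : ℝ) ^ (-s))⁻¹) (∑' n : ℕ, 1 / (n : ℝ) ^ s) := by
  have h := hasProd_one_sub_char_mul_rpow_inv (1 : DirichletCharacter ℝ 1) hs
  simpa [MulChar.one_apply (isUnit_of_subsingleton _), Real.rpow_neg] using h

/-- The negative of the local term `p ^ (-2 s)` at the primes `p ≡ 2 (mod 3)`, and `0` elsewhere. -/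
noncomputable def inertTerm (s : ℝ) (p : Nat.Primes) : ℝ :=
  if (p : ℕ) % 3 = 2 then -((p : ℝ) ^ (-s)) ^ 2 else 0

lemma norm_inertTerm_le {s : ℝ} (hs : 1 ≤ s) (p : Nat.Primes) :
    ‖inertTerm s p‖ ≤ ((p : ℝ) ^ 2)⁻¹ := by
  have hp : (1 : ℝ) ≤ p := by exact_mod_cast p.2.one_lt.le
  unfold inertTerm
  split_ifs
  · have h : (p : ℝ) ^ (-s) ≤ (p : ℝ)⁻¹ := by
      rw [← Real.rpow_neg_one]
      exact Real.rpow_le_rpow_of_exponent_le hp (by linarith)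
    rw [norm_neg, Real.norm_of_nonneg (by positivity), ← inv_pow]
    gcongr
  · simp only [norm_zero]
    positivity

lemma summable_primes_inv_sq : Summable fun p : Nat.Primes ↦ ((p : ℝ) ^ 2)⁻¹ :=
  (Real.summable_nat_pow_inv.mpr one_lt_two).comp_injective Nat.Primes.coe_nat_injective

lemma hasProd_inertTerm {s : ℝ} (hs : 1 ≤ s) :
    HasProd (fun p ↦ 1 + inertTerm s p) (∏' p, (1 + inertTerm s p)) :=
  (multipliable_one_add_of_summable (summable_primes_inv_sq.of_nonneg_of_le
    (fun _ ↦ norm_nonneg _) (norm_inertTerm_le hs))).hasProd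

lemma tendsto_tprod_inertTerm :
    Tendsto (fun s ↦ ∏' p, (1 + inertTerm s p)) (𝓝[>] 1) (𝓝 (∏' p, (1 + inertTerm 1 p))) := by
  refine tendsto_tprod_one_add_of_dominated_convergence summable_primes_inv_sq (fun p ↦ ?_) ?_
  · have hp : (p : ℝ) ≠ 0 := by exact_mod_cast p.2.ne_zero
    have hc : Continuous fun s ↦ inertTerm s p := by
      unfold inertTerm
      split_ifs
      · exact ((continuous_const.rpow continuous_neg fun _ ↦ Or.inl hp).pow 2).neg
      · exact continuous_const
    exact (hc.tendsto 1).mono_left nhdsWithin_le_nhds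
  · filter_upwards [self_mem_nhdsWithin] with s hs p
    exact norm_inertTerm_le (le_of_lt hs) p

/-- A product over all primes whose factors away from `p ≡ 1 (mod 3)` are trivial. -/
lemma HasProd.primes_one_mod_three {f : Nat.Primes → ℝ} {a : ℝ}
    {g : {p : ℕ // p.Prime ∧ p % 3 = 1} → ℝ} (hf : HasProd f a)
    (hne : ∀ p : Nat.Primes, (p : ℕ) % 3 ≠ 1 → f p = 1)
    (hg : ∀ p, f ⟨p.1, p.2.1⟩ = g p) : HasProd g a := by
  let i : {p : ℕ // p.Prime ∧ p % 3 = 1} → Nat.Primes := fun p ↦ ⟨p.1, p.2.1⟩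
  have hi : Function.Injective i := fun p q h ↦ Subtype.ext (congrArg (fun x : Nat.Primes ↦ (x : ℕ)) h)
  have h := (hi.hasProd_iff fun p hp ↦ hne p fun h1 ↦ hp ⟨⟨p, p.2, h1⟩, rfl⟩).mpr hf
  rwa [show f ∘ i = g from funext hg] at h

lemma Nat.Prime.eq_three {p : ℕ} (hp : p.Prime) (h : p % 3 = 0) : p = 3 :=
  ((Nat.prime_dvd_prime_iff_eq Nat.prime_three hp).mp (Nat.dvd_of_mod_eq_zero h)).symm

lemma hasProd_ite_eq_three (c : ℝ) :
    HasProd (fun p : Nat.Primes ↦ if (p : ℕ) = 3 then c else 1) c :=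
  hasProd_single (f := fun p : Nat.Primes ↦ if (p : ℕ) = 3 then c else 1) ⟨3, Nat.prime_three⟩
    fun _ hp ↦ if_neg fun h ↦ hp (Subtype.ext h)

lemma one_sub_prime_rpow_neg_pos (p : Nat.Primes) {s : ℝ} (hs : 0 < s) :
    0 < 1 - (p : ℝ) ^ (-s) :=
  sub_pos.mpr (Real.rpow_lt_one_of_one_lt_of_neg (by exact_mod_cast p.2.one_lt) (by linarith))

lemma hasProd_sq_primes_one_mod_three {s : ℝ} (hs : 1 < s) :
    HasProd (fun p : {p : ℕ // p.Prime ∧ p % 3 = 1} ↦ ((1 - (p : ℝ) ^ (-s))⁻¹) ^ 2)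
      ((∑' n : ℕ, 1 / (n : ℝ) ^ s) * (∑' n : ℕ, quadraticCharModThree n * (n : ℝ) ^ (-s)) *
        (∏' p, (1 + inertTerm s p)) * (1 - (3 : ℝ) ^ (-s))) := by
  refine ((((hasProd_one_sub_rpow_inv hs).mul
    (hasProd_one_sub_char_mul_rpow_inv quadraticCharModThree hs)).mul
    (hasProd_inertTerm hs.le)).mul
    (hasProd_ite_eq_three (1 - (3 : ℝ) ^ (-s)))).primes_one_mod_three
    (fun p hp ↦ ?_) fun p ↦ ?_
  · have hpos := one_sub_prime_rpow_neg_pos p (by linarith : 0 < s)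
    have hpos' : 0 < 1 + (p : ℝ) ^ (-s) := by positivity
    rcases (by lia : (p : ℕ) % 3 = 0 ∨ (p : ℕ) % 3 = 2) with h | h
    · have h3 := p.2.eq_three h
      rw [h3, Nat.cast_ofNat] at hpos
      rw [natCast_zmod_three_eq h, inertTerm, h3]
      simp [quadraticCharModThree_zero, hpos.ne']
    · have h3 : ¬ (p : ℕ) = 3 := by lia
      rw [natCast_zmod_three_eq h, Nat.cast_ofNat, quadraticCharModThree_two, inertTerm, if_pos h,
        if_neg h3]
      rw [neg_one_mul, sub_neg_eq_add, mul_one, ← mul_inv, inv_mul_eq_one₀ (by positivity)]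
      ring
  · have h3 : ¬ (p : ℕ) = 3 := by have := p.2.2; lia
    have h2 : ¬ (p : ℕ) % 3 = 2 := by have := p.2.2; lia
    simp only [natCast_zmod_three_eq p.2.2, Nat.cast_one, quadraticCharModThree_one, inertTerm,
      if_neg h2, if_neg h3]
    ring

lemma hasProd_two_primes_one_mod_three :
    HasProd (fun p : {p : ℕ // p.Prime ∧ p % 3 = 1} ↦ (1 - ((p : ℝ) ^ 2)⁻¹)⁻¹)
      (Real.pi ^ 2 / 6 * (∏' p, (1 + inertTerm 1 p)) * (8 / 9)) := by
  have hz := hasProd_one_sub_rpow_inv one_lt_two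
  have hsum : ∑' n : ℕ, 1 / (n : ℝ) ^ (2 : ℝ) = Real.pi ^ 2 / 6 := by
    simpa only [Real.rpow_two] using hasSum_zeta_two.tsum_eq
  have hpow (p : ℕ) : (p : ℝ) ^ (-2 : ℝ) = ((p : ℝ) ^ 2)⁻¹ := by
    rw [Real.rpow_neg p.cast_nonneg, Real.rpow_two]
  rw [hsum] at hz
  refine ((hz.mul (hasProd_inertTerm le_rfl)).mul
    (hasProd_ite_eq_three (8 / 9))).primes_one_mod_three
    (fun p hp ↦ ?_) fun p ↦ ?_
  · rcases (by lia : (p : ℕ) % 3 = 0 ∨ (p : ℕ) % 3 = 2) with h | h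
    · rw [hpow, inertTerm, p.2.eq_three h]
      norm_num
    · have h3 : ¬ (p : ℕ) = 3 := by lia
      have hpos := one_sub_prime_rpow_neg_pos p two_pos
      rw [hpow] at hpos
      rw [inertTerm, if_pos h, if_neg h3, hpow, Real.rpow_neg_one, inv_pow, mul_one,
        ← sub_eq_add_neg, inv_mul_cancel₀ hpos.ne']
  · have h3 : ¬ (p : ℕ) = 3 := by have := p.2.2; lia
    have h2 : ¬ (p : ℕ) % 3 = 2 := by have := p.2.2; lia
    simp only [inertTerm, if_neg h2, if_neg h3, hpow]
    ring

lemma tsum_quadraticCharModThree {s : ℝ} (hs : 1 < s) :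
    ∑' n : ℕ, quadraticCharModThree n * (n : ℝ) ^ (-s) =
      1 + ∑' n : ℕ, ((3 * n + 4 : ℝ) ^ (-s) - (3 * n + 2 : ℝ) ^ (-s)) := by
  have hsum := Real.summable_nat_rpow.mpr (by linarith : -s < -1)
  have h1 : Summable fun n : ℕ ↦ (3 * n + 1 : ℝ) ^ (-s) := by
    simpa [Function.comp_def] using
      hsum.comp_injective (i := fun n : ℕ ↦ 3 * n + 1) fun m n h ↦ by simpa using h
  have h2 : Summable fun n : ℕ ↦ (3 * n + 2 : ℝ) ^ (-s) := by
    simpa [Function.comp_def] using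
      hsum.comp_injective (i := fun n : ℕ ↦ 3 * n + 2) fun m n h ↦ by simpa using h
  have h4 : Summable fun n : ℕ ↦ (3 * n + 4 : ℝ) ^ (-s) := by
    simpa [Function.comp_def] using
      hsum.comp_injective (i := fun n : ℕ ↦ 3 * n + 4) fun m n h ↦ by simpa using h
  have hshift : ∑' n : ℕ, (3 * n + 1 : ℝ) ^ (-s) = 1 + ∑' n : ℕ, (3 * n + 4 : ℝ) ^ (-s) := by
    rw [h1.tsum_eq_zero_add]
    congr 1
    · simp
    · refine tsum_congr fun n ↦ ?_
      push_cast
      ring_nf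
  rw [Nat.sumByResidueClasses (summable_norm_char_mul_rpow quadraticCharModThree hs).of_norm 3,
    h4.tsum_sub h2, ← add_sub_assoc, ← hshift]
  have hres (j n : ℕ) : ((j + 3 * n : ℕ) : ZMod 3) = j := by
    rw [Nat.cast_add, Nat.cast_mul, ZMod.natCast_self, zero_mul, add_zero]
  have hsplit (F : ZMod 3 → ℝ) : ∑ j, F j = F 0 + F 1 + F 2 := Fin.sum_univ_three F
  have hval : (2 : ZMod 3).val = 2 := rfl
  have hval' : (1 : ZMod 3).val = 1 := rfl
  rw [hsplit]
  simp only [hres]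
  simp only [ZMod.val_zero, Nat.cast_zero, quadraticCharModThree_zero, zero_mul, tsum_zero,
    zero_add, hval, hval', Nat.cast_one, Nat.cast_ofNat, quadraticCharModThree_one,
    quadraticCharModThree_two, one_mul, neg_mul, tsum_neg, Nat.cast_add, Nat.cast_mul]
  simp only [add_comm, sub_eq_add_neg]

lemma norm_rpow_neg_sub_rpow_neg_le {a s : ℝ} (ha : 1 ≤ a) (hs : 1 ≤ s) (hs2 : s ≤ 2) :
    ‖(a + 2) ^ (-s) - a ^ (-s)‖ ≤ 4 * (a ^ 2)⁻¹ := by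
  have ha0 : 0 < a := by linarith
  have hb : 0 < a + 2 := by linarith
  have hle : (a + 2) ^ (-s) ≤ a ^ (-s) :=
    Real.rpow_le_rpow_of_nonpos ha0 (by linarith) (by linarith)
  have hbern : 1 - s * (2 / (a + 2)) ≤ (a / (a + 2)) ^ s := by
    have h := one_add_mul_self_le_rpow_one_add (s := -(2 / (a + 2)))
      (by rw [neg_le_neg_iff, div_le_one hb]; linarith) hs
    rw [show 1 + -(2 / (a + 2)) = a / (a + 2) by field_simp; ring] at h
    linarith
  have heq : a ^ (-s) - (a + 2) ^ (-s) = a ^ (-s) * (1 - (a / (a + 2)) ^ s) := by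
    have : a ^ s ≠ 0 := (Real.rpow_pos_of_pos ha0 s).ne'
    rw [Real.div_rpow ha0.le hb.le, Real.rpow_neg ha0.le, Real.rpow_neg hb.le]
    field_simp
  have hinv : a ^ (-s) ≤ a⁻¹ := by
    rw [← Real.rpow_neg_one]
    exact Real.rpow_le_rpow_of_exponent_le ha (by linarith)
  have hfrac : s * (2 / (a + 2)) ≤ 4 * a⁻¹ := by
    calc s * (2 / (a + 2)) ≤ 2 * (2 / a) := by gcongr; linarith
      _ = 4 * a⁻¹ := by ring
  rw [norm_sub_rev, Real.norm_of_nonneg (sub_nonneg.mpr hle), heq]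
  calc a ^ (-s) * (1 - (a / (a + 2)) ^ s) ≤ a ^ (-s) * (4 * a⁻¹) := by
        gcongr
        linarith
    _ ≤ a⁻¹ * (4 * a⁻¹) := by gcongr
    _ = 4 * (a ^ 2)⁻¹ := by ring

/-- The Mittag-Leffler expansion of the cotangent at `1 / 3`. -/
lemma one_add_tsum_eq_pi_div :
    1 + ∑' n : ℕ, ((3 * n + 4 : ℝ) ^ (-1 : ℝ) - (3 * n + 2 : ℝ) ^ (-1 : ℝ)) =
      Real.sqrt 3 * Real.pi / 9 := by
  have hz : (1 / 3 : ℂ) ∈ Complex.integerComplement := by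
    rintro ⟨n, hn⟩
    have h : (3 * n : ℤ) = 1 := by
      have : (3 * n : ℂ) = 1 := by rw [hn]; norm_num
      exact_mod_cast this
    lia
  have h := cot_series_rep' hz
  have hterm (n : ℕ) : (1 / (1 / 3 - (n + 1)) + 1 / (1 / 3 + (n + 1)) : ℂ) =
      ((3 * ((3 * n + 4 : ℝ) ^ (-1 : ℝ) - (3 * n + 2 : ℝ) ^ (-1 : ℝ)) : ℝ) : ℂ) := by
    rw [Real.rpow_neg_one, Real.rpow_neg_one]
    have h1 : (3 * n + 4 : ℂ) ≠ 0 := by norm_cast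
    have h2 : (3 * n + 2 : ℂ) ≠ 0 := by norm_cast
    have e1 : (1 / 3 - (n + 1) : ℂ) = -(3 * n + 2) / 3 := by ring
    have e2 : (1 / 3 + (n + 1) : ℂ) = (3 * n + 4) / 3 := by ring
    rw [e1, e2]
    push_cast
    field_simp
    ring
  have hcot : (Real.pi : ℂ) * Complex.cot (Real.pi * (1 / 3)) - 1 / (1 / 3) =
      ((Real.pi * (Real.sqrt 3 / 3) - 3 : ℝ) : ℂ) := by
    have e : (Real.pi : ℂ) * (1 / 3) = ((Real.pi / 3 : ℝ) : ℂ) := by push_cast; ring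
    have hs : Real.sqrt 3 ^ 2 = 3 := Real.sq_sqrt (by norm_num)
    have hs0 : Real.sqrt 3 ≠ 0 := by positivity
    have hv : Real.cos (Real.pi / 3) / Real.sin (Real.pi / 3) = Real.sqrt 3 / 3 := by
      rw [Real.cos_pi_div_three, Real.sin_pi_div_three]
      field_simp
      linarith
    rw [e, Complex.cot, ← Complex.ofReal_cos, ← Complex.ofReal_sin, ← Complex.ofReal_div, hv]
    push_cast
    norm_num
  simp only [hterm] at h
  rw [hcot, ← Complex.ofReal_tsum, tsum_mul_left, Complex.ofReal_inj] at h
  linarith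

lemma tendsto_tsum_quadraticCharModThree :
    Tendsto (fun s : ℝ ↦ ∑' n : ℕ, quadraticCharModThree n * (n : ℝ) ^ (-s)) (𝓝[>] 1)
      (𝓝 (Real.sqrt 3 * Real.pi / 9)) := by
  rw [← one_add_tsum_eq_pi_div]
  have hsum : Summable fun n : ℕ ↦ 4 * ((3 * n + 2 : ℝ) ^ 2)⁻¹ := by
    have h := (Real.summable_nat_pow_inv.mpr one_lt_two).comp_injective
      (i := fun n : ℕ ↦ 3 * n + 2) fun m n h ↦ by simpa using h
    simpa [Function.comp_def] using h.mul_left 4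
  have hlim : Tendsto
      (fun s : ℝ ↦ 1 + ∑' n : ℕ, ((3 * n + 4 : ℝ) ^ (-s) - (3 * n + 2 : ℝ) ^ (-s))) (𝓝[>] 1)
      (𝓝 (1 + ∑' n : ℕ, ((3 * n + 4 : ℝ) ^ (-1 : ℝ) - (3 * n + 2 : ℝ) ^ (-1 : ℝ)))) := by
    refine (tendsto_tsum_of_dominated_convergence hsum (fun n ↦ ?_) ?_).const_add 1
    · have hc : Continuous fun s : ℝ ↦ (3 * n + 4 : ℝ) ^ (-s) - (3 * n + 2 : ℝ) ^ (-s) :=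
        (continuous_const.rpow continuous_neg fun _ ↦ Or.inl (by positivity)).sub
          (continuous_const.rpow continuous_neg fun _ ↦ Or.inl (by positivity))
      exact (hc.tendsto 1).mono_left nhdsWithin_le_nhds
    · filter_upwards [Ioc_mem_nhdsGT one_lt_two] with s hs n
      have hn : (0 : ℝ) ≤ n := n.cast_nonneg
      have h := norm_rpow_neg_sub_rpow_neg_le (a := 3 * n + 2) (by linarith) hs.1.le hs.2
      rwa [show (3 * n + 2 + 2 : ℝ) = 3 * n + 4 by ring] at h
  refine hlim.congr' ?_
  filter_upwards [self_mem_nhdsWithin] with s hs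
  exact (tsum_quadraticCharModThree hs).symm

theorem euler_product_residue_mod3 :
    Filter.Tendsto
      (fun s : ℝ =>
        (s - 1) * ∏' p : {p : ℕ // p.Prime ∧ p % 3 = 1}, ((1 - (p : ℝ) ^ (-s))⁻¹) ^ 2)
      (nhdsWithin 1 (Set.Ioi 1))
      (nhds ((Real.sqrt 3 / (2 * Real.pi)) *
        ∏' p : {p : ℕ // p.Prime ∧ p % 3 = 1}, (1 - ((p : ℝ) ^ 2)⁻¹)⁻¹)) := by
  have hthree : Tendsto (fun s : ℝ ↦ 1 - (3 : ℝ) ^ (-s)) (𝓝[>] 1) (𝓝 (2 / 3)) := by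
    have hc : Continuous fun s : ℝ ↦ 1 - (3 : ℝ) ^ (-s) :=
      continuous_const.sub (continuous_const.rpow continuous_neg fun _ ↦ Or.inl (by norm_num))
    have h := (hc.tendsto 1).mono_left (nhdsWithin_le_nhds (s := Set.Ioi 1))
    rwa [Real.rpow_neg_one, show (1 - 3⁻¹ : ℝ) = 2 / 3 by norm_num] at h
  have hlim := ((tendsto_sub_mul_tsum_nat_rpow.mul tendsto_tsum_quadraticCharModThree).mul
    tendsto_tprod_inertTerm).mul hthree
  rw [hasProd_two_primes_one_mod_three.tprod_eq,
    show Real.sqrt 3 / (2 * Real.pi) *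
        (Real.pi ^ 2 / 6 * (∏' p, (1 + inertTerm 1 p)) * (8 / 9)) =
      1 * (Real.sqrt 3 * Real.pi / 9) * (∏' p, (1 + inertTerm 1 p)) * (2 / 3) by
      field_simp
      ring]
  refine hlim.congr' ?_
  filter_upwards [self_mem_nhdsWithin] with s hs
  rw [(hasProd_sq_primes_one_mod_three hs).tprod_eq]
  ring
end

section
/- As real s → 1 from the right, (s - 1) · ∏_{p prime, p ≡ 5 (mod 8)} (1 - p^{-s})^{-4} converges to (1/(2·ln(1 + √2))) · ∏_{p prime, p ≡ 5 (mod 8)} (1 - p^{-2})^{-2}. -/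
open Filter Topology
open ZMod (χ₈ χ₈' χ₈_apply χ₈_nat_eq_if_mod_eight χ₈'_nat_eq_if_mod_eight)

/-- The Dirichlet series `∑ χ(n) n⁻ˢ` of an integer-valued character modulo `8`, for real `s`. -/
noncomputable def realLSeries (χ : MulChar (ZMod 8) ℤ) (s : ℝ) : ℝ :=
  ∑' n : ℕ, (χ n : ℝ) * (n : ℝ) ^ (-s)

lemma abs_mulChar_int_le_one {N : ℕ} (χ : MulChar (ZMod N) ℤ) (a : ZMod N) :
    |(χ a : ℝ)| ≤ 1 := by
  by_cases ha : IsUnit a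
  · rcases Int.isUnit_iff.mp (ha.map χ) with h | h <;> simp [h]
  · simp [χ.map_nonunit ha]

lemma summable_norm_mulChar_mul_rpow {N : ℕ} (χ : MulChar (ZMod N) ℤ) {s : ℝ} (hs : 1 < s) :
    Summable fun n : ℕ => ‖(χ n : ℝ) * (n : ℝ) ^ (-s)‖ := by
  refine Summable.of_nonneg_of_le (fun _ => norm_nonneg _) (fun n => ?_)
    (Real.summable_nat_rpow.mpr (neg_lt_neg hs))
  rw [norm_mul, Real.norm_eq_abs, Real.norm_of_nonneg (by positivity)]
  exact mul_le_of_le_one_left (by positivity) (abs_mulChar_int_le_one χ n)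

/-- The summand `χ(n) n⁻ˢ` as a multiplicative map. -/
noncomputable def realLSeriesSummand (χ : MulChar (ZMod 8) ℤ) {s : ℝ} (hs : s ≠ 0) : ℕ →*₀ ℝ where
  toFun n := (χ n : ℝ) * (n : ℝ) ^ (-s)
  map_zero' := by simp [Real.zero_rpow (neg_ne_zero.mpr hs)]
  map_one' := by simp
  map_mul' m n := by
    rw [Nat.cast_mul, Nat.cast_mul, map_mul, Int.cast_mul,
      Real.mul_rpow m.cast_nonneg n.cast_nonneg]
    ring

lemma realLSeries_eulerProduct (χ : MulChar (ZMod 8) ℤ) {s : ℝ} (hs : 1 < s) :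
    HasProd (fun p : Nat.Primes => (1 - (χ (p : ℕ) : ℝ) * (p : ℝ) ^ (-s))⁻¹)
      (realLSeries χ s) :=
  EulerProduct.eulerProduct_completely_multiplicative_hasProd
    (f := realLSeriesSummand χ (zero_lt_one.trans hs).ne') (summable_norm_mulChar_mul_rpow χ hs)

/-! ### Limits at `1` -/

/-- The contribution to the Dirichlet series of the residues in `[8m, 8m + 8)`. -/
noncomputable def octetSum (χ : MulChar (ZMod 8) ℤ) (s : ℝ) (m : ℕ) : ℝ :=
  (8 * m + 1 : ℝ) ^ (-s) + χ 3 * (8 * m + 3 : ℝ) ^ (-s) + χ 5 * (8 * m + 5 : ℝ) ^ (-s) +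
    χ 7 * (8 * m + 7 : ℝ) ^ (-s)

lemma realLSeries_eq_tsum_octetSum (χ : MulChar (ZMod 8) ℤ) {s : ℝ} (hs : 1 < s) :
    realLSeries χ s = ∑' m, octetSum χ s m := by
  have hsum := (summable_norm_mulChar_mul_rpow χ hs).of_norm
  have hres (j : ZMod 8) : Summable fun m : ℕ =>
      (χ ((j.val + 8 * m : ℕ) : ZMod 8) : ℝ) * ((j.val + 8 * m : ℕ) : ℝ) ^ (-s) :=
    hsum.comp_injective (i := fun m : ℕ => j.val + 8 * m) fun a b h => by
      simpa using h
  rw [realLSeries, Nat.sumByResidueClasses hsum 8, ← Summable.tsum_finsetSum fun j _ => hres j]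
  refine tsum_congr fun m => ?_
  have h8 : (8 : ZMod 8) = 0 := rfl
  have e0 : χ 0 = 0 := χ.map_nonunit (by decide)
  have e2 : χ 2 = 0 := χ.map_nonunit (by decide)
  have e4 : χ 4 = 0 := χ.map_nonunit (by decide)
  have e6 : χ 6 = 0 := χ.map_nonunit (by decide)
  have hval (j : ZMod 8) : ((j.val + 8 * m : ℕ) : ZMod 8) = j := by
    simp [h8]
  simp only [hval]
  rw [show (Finset.univ : Finset (ZMod 8)) = {0, 1, 2, 3, 4, 5, 6, 7} from rfl]
  have v1 : (1 : ZMod 8).val = 1 := rfl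
  have v3 : (3 : ZMod 8).val = 3 := rfl
  have v5 : (5 : ZMod 8).val = 5 := rfl
  have v7 : (7 : ZMod 8).val = 7 := rfl
  rw [Finset.sum_insert (by decide), Finset.sum_insert (by decide), Finset.sum_insert (by decide),
    Finset.sum_insert (by decide), Finset.sum_insert (by decide), Finset.sum_insert (by decide),
    Finset.sum_insert (by decide), Finset.sum_singleton]
  simp only [e0, e2, e4, e6, v1, v3, v5, v7, map_one, octetSum]
  push_cast
  simp only [add_comm (8 * (m : ℝ))]
  ring

lemma abs_rpow_neg_sub_rpow_neg_le {x d s : ℝ} (hx : 1 ≤ x) (hd : 0 ≤ d) (hs : 1 ≤ s)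
    (hs2 : s ≤ 2) : |(x + d) ^ (-s) - x ^ (-s)| ≤ 2 * d / x ^ 2 := by
  have hx0 : 0 < x := by linarith
  have := (convex_Icc x (x + d)).norm_image_sub_le_of_norm_hasDerivWithin_le
    (f := fun y => y ^ (-s)) (f' := fun y => -s * y ^ (-s - 1)) (C := 2 / x ^ 2)
    (x := x) (y := x + d)
    (fun y hy => (Real.hasDerivAt_rpow_const (Or.inl (hx0.trans_le hy.1).ne')).hasDerivWithinAt)
    (fun y hy => by
      have hy0 : 0 < y := hx0.trans_le hy.1
      have h1 : y ^ (-s - 1) ≤ 1 / x ^ 2 := calc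
        y ^ (-s - 1) ≤ y ^ (-2 : ℝ) :=
          Real.rpow_le_rpow_of_exponent_le (hx.trans hy.1) (by linarith)
        _ = 1 / y ^ 2 := by rw [Real.rpow_neg hy0.le, Real.rpow_two, one_div]
        _ ≤ 1 / x ^ 2 := by gcongr; exact hy.1
      rw [norm_mul, norm_neg, Real.norm_of_nonneg (by linarith : (0 : ℝ) ≤ s),
        Real.norm_of_nonneg (by positivity), div_eq_mul_one_div]
      gcongr)
    (by simp [hd]) (by simp [hd])
  rw [Real.norm_eq_abs, Real.norm_eq_abs, add_sub_cancel_left, abs_of_nonneg hd] at this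
  exact this.trans_eq (by ring)

lemma abs_octetSum_le {χ : MulChar (ZMod 8) ℤ} (hχ : χ 3 + χ 5 + χ 7 = -1) {s : ℝ}
    (hs : 1 ≤ s) (hs2 : s ≤ 2) (m : ℕ) : |octetSum χ s m| ≤ 24 * (1 / (m + 1 : ℝ) ^ 2) := by
  have hχ' : (χ 3 + χ 5 + χ 7 : ℝ) = -1 := by exact_mod_cast hχ
  set x : ℝ := 8 * m + 1 with hx
  have hx1 : 1 ≤ x := by rw [hx]; linarith [m.cast_nonneg (α := ℝ)]
  have hxm : (m + 1 : ℝ) ≤ x := by rw [hx]; linarith [m.cast_nonneg (α := ℝ)]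
  have key (a : ZMod 8) {d : ℝ} (hd : 0 ≤ d) :
      |(χ a : ℝ) * ((x + d) ^ (-s) - x ^ (-s))| ≤ 2 * d / x ^ 2 := by
    rw [abs_mul]
    exact (mul_le_of_le_one_left (abs_nonneg _) (abs_mulChar_int_le_one χ a)).trans
      (abs_rpow_neg_sub_rpow_neg_le hx1 hd hs hs2)
  have e : octetSum χ s m = χ 3 * ((x + 2) ^ (-s) - x ^ (-s)) +
      χ 5 * ((x + 4) ^ (-s) - x ^ (-s)) + χ 7 * ((x + 6) ^ (-s) - x ^ (-s)) := by
    rw [octetSum, ← hx, show (8 * m + 3 : ℝ) = x + 2 by rw [hx]; ring,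
      show (8 * m + 5 : ℝ) = x + 4 by rw [hx]; ring, show (8 * m + 7 : ℝ) = x + 6 by rw [hx]; ring]
    linear_combination x ^ (-s) * hχ'
  calc |octetSum χ s m| ≤ 2 * 2 / x ^ 2 + 2 * 4 / x ^ 2 + 2 * 6 / x ^ 2 := by
        rw [e]
        exact (abs_add_three _ _ _).trans (add_le_add_three (key 3 (by norm_num))
          (key 5 (by norm_num)) (key 7 (by norm_num)))
    _ = 24 * (1 / x ^ 2) := by ring
    _ ≤ 24 * (1 / (m + 1 : ℝ) ^ 2) := by gcongr

lemma summable_octetSum_bound : Summable fun m : ℕ => 24 * (1 / (m + 1 : ℝ) ^ 2) := by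
  have := (summable_nat_add_iff 1).mpr (Real.summable_one_div_nat_pow.mpr one_lt_two)
  exact (by simpa using this : Summable fun m : ℕ => 1 / (m + 1 : ℝ) ^ 2).mul_left 24

lemma tendsto_realLSeries_tsum_octetSum {χ : MulChar (ZMod 8) ℤ} (hχ : χ 3 + χ 5 + χ 7 = -1) :
    Tendsto (realLSeries χ) (𝓝[>] 1) (𝓝 (∑' m, octetSum χ 1 m)) := by
  have hlim : Tendsto (fun s => ∑' m, octetSum χ s m) (𝓝[>] 1) (𝓝 (∑' m, octetSum χ 1 m)) := by
    refine tendsto_tsum_of_dominated_convergence summable_octetSum_bound (fun m => ?_) ?_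
    · refine tendsto_nhdsWithin_of_tendsto_nhds (Continuous.tendsto ?_ 1)
      unfold octetSum
      have hc (r : ℝ) (hr : 0 < r) : Continuous fun s : ℝ => (8 * m + r) ^ (-s) :=
        continuous_const.rpow continuous_neg fun _ => Or.inl (by positivity)
      have := hc 1 one_pos
      have := hc 3 (by norm_num)
      have := hc 5 (by norm_num)
      have := hc 7 (by norm_num)
      fun_prop
    · filter_upwards [Ioc_mem_nhdsGT one_lt_two] with s hs m
      exact abs_octetSum_le hχ hs.1.le hs.2 m
  refine hlim.congr' ?_
  filter_upwards [self_mem_nhdsWithin] with s hs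
  exact (realLSeries_eq_tsum_octetSum χ hs).symm

lemma integral_pow_unit (n : ℕ) : ∫ x in (0 : ℝ)..1, x ^ n = ((n : ℝ) + 1)⁻¹ := by
  simp [integral_pow]

lemma sum_octetSum_one (χ : MulChar (ZMod 8) ℤ) {g : ℝ → ℝ} (hg : Continuous g)
    (hgχ : ∀ x, g x * (1 - x ^ 8) = 1 + χ 3 * x ^ 2 + χ 5 * x ^ 4 + χ 7 * x ^ 6) (K : ℕ) :
    ∑ m ∈ Finset.range K, octetSum χ 1 m =
      (∫ x in (0 : ℝ)..1, g x) - ∫ x in (0 : ℝ)..1, g x * x ^ (8 * K) := by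
  induction K with
  | zero => simp
  | succ K ih =>
    rw [Finset.sum_range_succ, ih]
    have hi (n : ℕ) : IntervalIntegrable (fun x => g x * x ^ n) MeasureTheory.volume 0 1 :=
      (hg.mul (continuous_pow n)).intervalIntegrable _ _
    have hp (c : ℝ) (n : ℕ) : IntervalIntegrable (fun x => c * x ^ n) MeasureTheory.volume 0 1 :=
      (continuous_const.mul (continuous_pow n)).intervalIntegrable _ _
    have : octetSum χ 1 K =
        (∫ x in (0 : ℝ)..1, g x * x ^ (8 * K)) - ∫ x in (0 : ℝ)..1, g x * x ^ (8 * (K + 1)) := by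
      rw [← intervalIntegral.integral_sub (hi _) (hi _)]
      have e (x : ℝ) : g x * x ^ (8 * K) - g x * x ^ (8 * (K + 1)) =
          1 * x ^ (8 * K) + χ 3 * x ^ (8 * K + 2) + χ 5 * x ^ (8 * K + 4) +
            χ 7 * x ^ (8 * K + 6) := by
        linear_combination x ^ (8 * K) * hgχ x
      simp only [e]
      rw [intervalIntegral.integral_add (((hp _ _).add (hp _ _)).add (hp _ _)) (hp _ _),
        intervalIntegral.integral_add ((hp _ _).add (hp _ _)) (hp _ _),
        intervalIntegral.integral_add (hp _ _) (hp _ _)]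
      simp only [intervalIntegral.integral_const_mul, integral_pow_unit, octetSum,
        Real.rpow_neg_one]
      push_cast
      ring_nf
    rw [this]
    ring

lemma tendsto_integral_mul_pow_zero {g : ℝ → ℝ} (hg : Continuous g) :
    Tendsto (fun n : ℕ => ∫ x in (0 : ℝ)..1, g x * x ^ n) atTop (𝓝 0) := by
  obtain ⟨C, hC⟩ := isCompact_Icc.exists_bound_of_continuousOn (s := Set.Icc (0 : ℝ) 1)
    hg.continuousOn
  have hlim : Tendsto (fun n : ℕ => C * (1 / ((n : ℝ) + 1))) atTop (𝓝 0) := by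
    simpa using tendsto_one_div_add_atTop_nhds_zero_nat.const_mul C
  refine squeeze_zero_norm (fun n => ?_) hlim
  rw [one_div, ← integral_pow_unit, ← intervalIntegral.integral_const_mul]
  refine intervalIntegral.norm_integral_le_of_norm_le zero_le_one
    (Eventually.of_forall fun x hx => ?_)
    ((continuous_const.mul (continuous_pow n)).intervalIntegrable _ _)
  have hx0 : 0 ≤ x ^ n := pow_nonneg hx.1.le n
  rw [norm_mul, Real.norm_of_nonneg hx0]
  exact mul_le_mul_of_nonneg_right (hC x ⟨hx.1.le, hx.2⟩) hx0

/-- If `∑ χ(n) xⁿ⁻¹ = g(x)` then `L(χ, s)` tends to `∫₀¹ g` as `s → 1⁺`. -/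
lemma tendsto_realLSeries_integral {χ : MulChar (ZMod 8) ℤ} (hχ : χ 3 + χ 5 + χ 7 = -1)
    {g : ℝ → ℝ} (hg : Continuous g)
    (hgχ : ∀ x, g x * (1 - x ^ 8) = 1 + χ 3 * x ^ 2 + χ 5 * x ^ 4 + χ 7 * x ^ 6) :
    Tendsto (realLSeries χ) (𝓝[>] 1) (𝓝 (∫ x in (0 : ℝ)..1, g x)) := by
  have hsum : Summable (octetSum χ 1) :=
    Summable.of_norm_bounded summable_octetSum_bound fun m =>
      abs_octetSum_le hχ le_rfl one_le_two m
  have hlim : Tendsto (fun K => ∑ m ∈ Finset.range K, octetSum χ 1 m) atTop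
      (𝓝 (∫ x in (0 : ℝ)..1, g x)) := by
    simp only [sum_octetSum_one χ hg hgχ]
    simpa using ((tendsto_integral_mul_pow_zero hg).comp
      (tendsto_id.const_mul_atTop' (r := 8) (by norm_num))).const_sub (∫ x in (0 : ℝ)..1, g x)
  rw [← tendsto_nhds_unique hsum.hasSum.tendsto_sum_nat hlim]
  exact tendsto_realLSeries_tsum_octetSum hχ

lemma Summable.tsum_even_add_tsum_odd {f : ℕ → ℝ} (hf : Summable f) :
    ∑' k, f (2 * k) + ∑' k, f (2 * k + 1) = ∑' n, f n :=
  tsum_even_add_odd (hf.comp_injective fun a b h => by simpa using h)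
    (hf.comp_injective fun a b h => by simpa using h)

lemma tendsto_realLSeries_χ₈_mul_χ₈ :
    Tendsto (fun s => (s - 1) * realLSeries (χ₈ * χ₈) s) (𝓝[>] 1) (𝓝 (1 / 2)) := by
  have h2 : Tendsto (fun s : ℝ => 1 - (2 : ℝ) ^ (-s)) (𝓝[>] 1) (𝓝 (1 / 2)) := by
    have hc : Continuous fun s : ℝ => 1 - (2 : ℝ) ^ (-s) :=
      continuous_const.sub (continuous_const.rpow continuous_neg fun _ => Or.inl two_ne_zero)
    have := tendsto_nhdsWithin_of_tendsto_nhds (s := Set.Ioi 1) (hc.tendsto 1)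
    rwa [show 1 - (2 : ℝ) ^ (-1 : ℝ) = 1 / 2 by rw [Real.rpow_neg_one]; norm_num] at this
  have hlim := h2.mul tendsto_sub_mul_tsum_nat_rpow
  rw [mul_one] at hlim
  refine hlim.congr' ?_
  filter_upwards [self_mem_nhdsWithin] with s (hs : 1 < s)
  have hζ : Summable fun n : ℕ => 1 / (n : ℝ) ^ s := Real.summable_one_div_nat_rpow.mpr hs
  have hsum := (summable_norm_mulChar_mul_rpow (χ₈ * χ₈) hs).of_norm
  have evenVal (k : ℕ) : (χ₈ * χ₈) ((2 * k : ℕ) : ZMod 8) = 0 := by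
    have : ∀ a : ZMod 8, χ₈ (2 * a) = 0 := by decide
    simp [MulChar.mul_apply, this, -χ₈_apply]
  have oddVal (k : ℕ) : (χ₈ * χ₈) ((2 * k + 1 : ℕ) : ZMod 8) = 1 := by
    have : ∀ a : ZMod 8, χ₈ (2 * a + 1) * χ₈ (2 * a + 1) = 1 := by decide
    simp only [MulChar.mul_apply]
    push_cast
    exact this k
  have hL : realLSeries (χ₈ * χ₈) s = ∑' k : ℕ, 1 / ((2 * k + 1 : ℕ) : ℝ) ^ s := by
    rw [realLSeries, ← hsum.tsum_even_add_tsum_odd]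
    simp only [evenVal, oddVal, Int.cast_zero, zero_mul, tsum_zero, zero_add, Int.cast_one, one_mul,
      Real.rpow_neg (Nat.cast_nonneg _), one_div]
  have hE : ∑' k : ℕ, 1 / ((2 * k : ℕ) : ℝ) ^ s = (2 : ℝ) ^ (-s) * ∑' k : ℕ, 1 / (k : ℝ) ^ s := by
    rw [← tsum_mul_left]
    refine tsum_congr fun k => ?_
    rw [Nat.cast_mul, Real.mul_rpow (Nat.cast_nonneg _) (Nat.cast_nonneg _),
      Real.rpow_neg zero_le_two, Nat.cast_ofNat]
    field_simp
  have hsplit := hζ.tsum_even_add_tsum_odd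
  rw [hL]
  rw [hE] at hsplit
  linear_combination (s - 1) * -hsplit

lemma tendsto_realLSeries_χ₈_mul_χ₈' :
    Tendsto (realLSeries (χ₈ * χ₈')) (𝓝[>] 1) (𝓝 (Real.pi / 4)) := by
  have e3 : (χ₈ * χ₈') 3 = -1 := rfl
  have e5 : (χ₈ * χ₈') 5 = 1 := rfl
  have e7 : (χ₈ * χ₈') 7 = -1 := rfl
  have h := tendsto_realLSeries_integral (χ := χ₈ * χ₈') (by rw [e3, e5, e7]; rfl)
    (g := fun x => 1 / (1 + x ^ 2))
    (continuous_const.div (by fun_prop) fun x => by positivity)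
    (fun x => by
      rw [e3, e5, e7]
      have : 1 + x ^ 2 ≠ 0 := by positivity
      push_cast
      field_simp
      ring)
  rwa [integral_one_div_one_add_sq, Real.arctan_one, Real.arctan_zero, sub_zero] at h

lemma one_add_pow_four_eq (x : ℝ) :
    1 + x ^ 4 = (1 + √2 * x + x ^ 2) * (1 - √2 * x + x ^ 2) := by
  linear_combination x ^ 2 * Real.sq_sqrt zero_le_two

lemma one_add_sqrt_two_mul_add_sq_pos (x : ℝ) : 0 < 1 + √2 * x + x ^ 2 := by
  nlinarith [sq_nonneg (√2 * x + 1), Real.sq_sqrt (zero_le_two (α := ℝ))]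

lemma one_sub_sqrt_two_mul_add_sq_pos (x : ℝ) : 0 < 1 - √2 * x + x ^ 2 := by
  nlinarith [sq_nonneg (√2 * x - 1), Real.sq_sqrt (zero_le_two (α := ℝ))]

lemma continuous_div_one_add_pow_four {f : ℝ → ℝ} (hf : Continuous f) :
    Continuous fun x => f x / (1 + x ^ 4) :=
  hf.div (by fun_prop) fun x => by positivity

lemma integral_one_sub_sq_div_one_add_pow_four :
    ∫ x in (0 : ℝ)..1, (1 - x ^ 2) / (1 + x ^ 4) = Real.log (1 + √2) / √2 := by
  have h2 : √2 ^ 2 = 2 := Real.sq_sqrt zero_le_two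
  have h0 : 0 < √2 := by positivity
  have hd (x : ℝ) : HasDerivAt (fun x => (Real.log (1 + √2 * x + x ^ 2) -
      Real.log (1 - √2 * x + x ^ 2)) / (2 * √2)) ((1 - x ^ 2) / (1 + x ^ 4)) x := by
    have hp := one_add_sqrt_two_mul_add_sq_pos x
    have hm := one_sub_sqrt_two_mul_add_sq_pos x
    have d1 : HasDerivAt (fun x : ℝ => 1 + √2 * x + x ^ 2) (√2 + 2 * x) x := by
      simpa using (((hasDerivAt_id x).const_mul √2).const_add 1).fun_add (hasDerivAt_pow 2 x)
    have d2 : HasDerivAt (fun x : ℝ => 1 - √2 * x + x ^ 2) (-√2 + 2 * x) x := by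
      simpa using (((hasDerivAt_id x).const_mul √2).const_sub 1).fun_add (hasDerivAt_pow 2 x)
    refine (((d1.log hp.ne').sub (d2.log hm.ne')).div_const (2 * √2)).congr_deriv ?_
    rw [one_add_pow_four_eq]
    field_simp
    ring
  rw [intervalIntegral.integral_eq_sub_of_hasDerivAt (fun x _ => hd x)
    ((continuous_div_one_add_pow_four (by fun_prop)).intervalIntegrable _ _)]
  have hm := one_sub_sqrt_two_mul_add_sq_pos 1
  have hlog : Real.log (1 + √2 * 1 + 1 ^ 2) =
      2 * Real.log (1 + √2) + Real.log (1 - √2 * 1 + 1 ^ 2) := by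
    have hsq : Real.log ((1 + √2) ^ 2) = 2 * Real.log (1 + √2) := by simp [Real.log_pow]
    rw [← hsq, ← Real.log_mul (by positivity) hm.ne']
    congr 1
    linear_combination √2 * h2
  rw [hlog]
  simp
  field_simp

lemma integral_one_add_sq_div_one_add_pow_four :
    ∫ x in (0 : ℝ)..1, (1 + x ^ 2) / (1 + x ^ 4) = Real.pi / (2 * √2) := by
  have h2 : √2 ^ 2 = 2 := Real.sq_sqrt zero_le_two
  have h0 : 0 < √2 := by positivity
  have hd (x : ℝ) : HasDerivAt (fun x => (Real.arctan (√2 * x + 1) +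
      Real.arctan (√2 * x - 1)) / √2) ((1 + x ^ 2) / (1 + x ^ 4)) x := by
    have hp := one_add_sqrt_two_mul_add_sq_pos x
    have hm := one_sub_sqrt_two_mul_add_sq_pos x
    have d1 : HasDerivAt (fun x : ℝ => √2 * x + 1) √2 x := by
      simpa using ((hasDerivAt_id x).const_mul √2).add_const 1
    have d2 : HasDerivAt (fun x : ℝ => √2 * x - 1) √2 x := by
      simpa using ((hasDerivAt_id x).const_mul √2).sub_const 1
    refine ((d1.arctan.add d2.arctan).div_const √2).congr_deriv ?_
    rw [one_add_pow_four_eq,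
      show 1 + (√2 * x + 1) ^ 2 = 2 * (1 + √2 * x + x ^ 2) by linear_combination x ^ 2 * h2,
      show 1 + (√2 * x - 1) ^ 2 = 2 * (1 - √2 * x + x ^ 2) by linear_combination x ^ 2 * h2]
    field_simp
    ring
  rw [intervalIntegral.integral_eq_sub_of_hasDerivAt (fun x _ => hd x)
    ((continuous_div_one_add_pow_four (by fun_prop)).intervalIntegrable _ _)]
  have hinv : Real.arctan (√2 - 1) = Real.pi / 2 - Real.arctan (√2 + 1) := by
    rw [← Real.arctan_inv_of_pos (by positivity)]
    congr 1
    refine eq_inv_of_mul_eq_one_left ?_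
    linear_combination h2
  simp [hinv, Real.arctan_neg]
  field_simp

lemma tendsto_realLSeries_χ₈ :
    Tendsto (realLSeries χ₈) (𝓝[>] 1) (𝓝 (Real.log (1 + √2) / √2)) := by
  have e3 : χ₈ 3 = -1 := rfl
  have e5 : χ₈ 5 = -1 := rfl
  have e7 : χ₈ 7 = 1 := rfl
  rw [← integral_one_sub_sq_div_one_add_pow_four]
  refine tendsto_realLSeries_integral (by rw [e3, e5, e7]; rfl)
    (continuous_div_one_add_pow_four (by fun_prop)) fun x => ?_
  rw [e3, e5, e7]
  have : 1 + x ^ 4 ≠ 0 := by positivity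
  push_cast
  field_simp
  ring

lemma tendsto_realLSeries_χ₈' :
    Tendsto (realLSeries χ₈') (𝓝[>] 1) (𝓝 (Real.pi / (2 * √2))) := by
  have e3 : χ₈' 3 = 1 := rfl
  have e5 : χ₈' 5 = -1 := rfl
  have e7 : χ₈' 7 = -1 := rfl
  rw [← integral_one_add_sq_div_one_add_pow_four]
  refine tendsto_realLSeries_integral (by rw [e3, e5, e7]; rfl)
    (continuous_div_one_add_pow_four (by fun_prop)) fun x => ?_
  rw [e3, e5, e7]
  have : 1 + x ^ 4 ≠ 0 := by positivity
  push_cast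
  field_simp
  ring

/-! ### The product over primes congruent to `5` modulo `8` -/

lemma norm_inv_one_sub_rpow_neg_sub_one_le {p : ℕ} (hp : p.Prime) {s t : ℝ} (ht : 1 < t)
    (hts : t ≤ s) : ‖(1 - (p : ℝ) ^ (-s))⁻¹ - 1‖ ≤ 2 * (p : ℝ) ^ (-t) := by
  have hp2 : (2 : ℝ) ≤ p := by exact_mod_cast hp.two_le
  have hx0 : 0 < (p : ℝ) ^ (-s) := by positivity
  have hxt : (p : ℝ) ^ (-s) ≤ (p : ℝ) ^ (-t) :=
    Real.rpow_le_rpow_of_exponent_le (by linarith) (by linarith)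
  have hx2 : (p : ℝ) ^ (-s) ≤ 1 / 2 := calc
    (p : ℝ) ^ (-s) ≤ (p : ℝ) ^ (-1 : ℝ) :=
      Real.rpow_le_rpow_of_exponent_le (by linarith) (by linarith)
    _ = 1 / p := by rw [Real.rpow_neg_one, one_div]
    _ ≤ 1 / 2 := by gcongr
  have e : (1 - (p : ℝ) ^ (-s))⁻¹ - 1 = (p : ℝ) ^ (-s) / (1 - (p : ℝ) ^ (-s)) := by
    have : 1 - (p : ℝ) ^ (-s) ≠ 0 := by linarith
    field_simp
    ring
  rw [e, Real.norm_of_nonneg (div_nonneg hx0.le (by linarith)), div_le_iff₀ (by linarith)]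
  nlinarith

lemma summable_two_mul_prime_rpow {t : ℝ} (ht : 1 < t) :
    Summable fun p : {p : ℕ // p.Prime ∧ p % 8 = 5} => 2 * ((p : ℕ) : ℝ) ^ (-t) :=
  ((Real.summable_nat_rpow.mpr (neg_lt_neg ht)).comp_injective
    Subtype.val_injective).mul_left 2

lemma multipliable_inv_one_sub_rpow_neg {s : ℝ} (hs : 1 < s) :
    Multipliable fun p : {p : ℕ // p.Prime ∧ p % 8 = 5} => (1 - (p : ℝ) ^ (-s))⁻¹ := by
  have := Real.multipliable_one_add_of_summable
    (Summable.of_norm_bounded (summable_two_mul_prime_rpow hs) fun p =>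
      norm_inv_one_sub_rpow_neg_sub_one_le p.2.1 hs le_rfl)
  simpa using this

lemma tendsto_tprod_inv_one_sub_rpow_neg {t : ℝ} (ht : 1 < t) :
    Tendsto (fun s : ℝ => ∏' p : {p : ℕ // p.Prime ∧ p % 8 = 5}, (1 - (p : ℝ) ^ (-s))⁻¹)
      (𝓝[>] t) (𝓝 (∏' p : {p : ℕ // p.Prime ∧ p % 8 = 5}, (1 - (p : ℝ) ^ (-t))⁻¹)) := by
  have := tendsto_tprod_one_add_of_dominated_convergence (𝓕 := 𝓝[>] t)
    (f := fun s (p : {p : ℕ // p.Prime ∧ p % 8 = 5}) => (1 - (p : ℝ) ^ (-s))⁻¹ - 1)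
    (g := fun p : {p : ℕ // p.Prime ∧ p % 8 = 5} => (1 - (p : ℝ) ^ (-t))⁻¹ - 1)
    (summable_two_mul_prime_rpow ht) (fun p => ?_) ?_
  · simpa using this
  · have hp : (1 : ℝ) < p := by exact_mod_cast p.2.1.one_lt
    have hc : ContinuousAt (fun s : ℝ => (1 - (p : ℝ) ^ (-s))⁻¹ - 1) t :=
      ((continuousAt_const.sub (continuousAt_const.rpow continuousAt_neg
        (Or.inl (by positivity)))).inv₀
          (sub_pos.mpr (Real.rpow_lt_one_of_one_lt_of_neg hp (by linarith))).ne').sub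
        continuousAt_const
    exact tendsto_nhdsWithin_of_tendsto_nhds hc.tendsto
  · filter_upwards [self_mem_nhdsWithin] with s hs p
    exact norm_inv_one_sub_rpow_neg_sub_one_le p.2.1 ht (le_of_lt hs)

/-- Comparison of the Euler factors of the four characters modulo `8`. -/
lemma eulerFactor_mod_eight_identity {p : ℕ} {x : ℝ} (hx0 : 0 < x) (hx1 : x < 1) :
    (1 - ((χ₈ * χ₈) p : ℝ) * x)⁻¹ * (1 - ((χ₈ * χ₈') p : ℝ) * x)⁻¹ *
      (if p % 8 = 5 then (1 - x ^ 2)⁻¹ else 1) ^ 2 =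
    (1 - (χ₈ p : ℝ) * x)⁻¹ * (1 - (χ₈' p : ℝ) * x)⁻¹ *
      (if p % 8 = 5 then (1 - x)⁻¹ else 1) ^ 4 := by
  have h1 : 1 - x ≠ 0 := by linarith
  have h2 : 1 + x ≠ 0 := by linarith
  simp only [MulChar.mul_apply, χ₈_nat_eq_if_mod_eight, χ₈'_nat_eq_if_mod_eight]
  by_cases h5 : p % 8 = 5
  · have hodd : p % 2 ≠ 0 := by omega
    simp only [h5, hodd]
    rw [show 1 - x ^ 2 = (1 - x) * (1 + x) by ring]
    norm_num
    field_simp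
  · have : p % 2 = 0 ∨ p % 2 ≠ 0 ∧ (p % 8 = 1 ∨ p % 8 = 3 ∨ p % 8 = 7) := by omega
    rcases this with h | ⟨h, h' | h' | h'⟩
    · simp [h, h5]
    all_goals simp [h, h', mul_comm]

lemma hasProd_mod_eight_five {s : ℝ} (hs : 1 < s) :
    HasProd (fun p : Nat.Primes => if (p : ℕ) % 8 = 5 then (1 - (p : ℝ) ^ (-s))⁻¹ else 1)
      (∏' p : {p : ℕ // p.Prime ∧ p % 8 = 5}, (1 - (p : ℝ) ^ (-s))⁻¹) := by
  have h := (multipliable_inv_one_sub_rpow_neg hs).hasProd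
  rw [← (Equiv.subtypeSubtypeEquivSubtypeInter Nat.Prime (fun p => p % 8 = 5)).hasProd_iff] at h
  have h' := (hasProd_subtype_iff_mulIndicator (s := {p : Nat.Primes | (p : ℕ) % 8 = 5})
    (f := fun p : Nat.Primes => (1 - (p : ℝ) ^ (-s))⁻¹)).mp h
  refine h'.congr_fun fun p => ?_
  simp [Set.mulIndicator_apply]

lemma realLSeries_mul_eq {s : ℝ} (hs : 1 < s) :
    realLSeries (χ₈ * χ₈) s * realLSeries (χ₈ * χ₈') s *
      (∏' p : {p : ℕ // p.Prime ∧ p % 8 = 5}, (1 - (p : ℝ) ^ (-(2 * s)))⁻¹) ^ 2 =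
    realLSeries χ₈ s * realLSeries χ₈' s *
      (∏' p : {p : ℕ // p.Prime ∧ p % 8 = 5}, (1 - (p : ℝ) ^ (-s))⁻¹) ^ 4 := by
  have hl := ((realLSeries_eulerProduct (χ₈ * χ₈) hs).mul
    (realLSeries_eulerProduct (χ₈ * χ₈') hs)).mul
      ((hasProd_mod_eight_five (s := 2 * s) (by linarith)).pow 2)
  have hr := ((realLSeries_eulerProduct χ₈ hs).mul
    (realLSeries_eulerProduct χ₈' hs)).mul ((hasProd_mod_eight_five hs).pow 4)
  refine hl.unique (hr.congr_fun fun p => ?_)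
  have hp : (1 : ℝ) < p := by exact_mod_cast p.2.one_lt
  have hsq : ((p : ℕ) : ℝ) ^ (-(2 * s)) = (((p : ℕ) : ℝ) ^ (-s)) ^ 2 := by
    rw [← Real.rpow_mul_natCast (Nat.cast_nonneg _)]
    congr 1
    push_cast
    ring
  simp only [hsq]
  exact eulerFactor_mod_eight_identity (by positivity)
    (Real.rpow_lt_one_of_one_lt_of_neg hp (by linarith))

theorem euler_product_residue_mod8_five :
    Filter.Tendsto
      (fun s : ℝ =>
        (s - 1) * ∏' p : {p : ℕ // p.Prime ∧ p % 8 = 5}, ((1 - (p : ℝ) ^ (-s))⁻¹) ^ 4)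
      (nhdsWithin 1 (Set.Ioi 1))
      (nhds ((1 / (2 * Real.log (1 + Real.sqrt 2))) *
        ∏' p : {p : ℕ // p.Prime ∧ p % 8 = 5}, ((1 - ((p : ℝ) ^ 2)⁻¹)⁻¹) ^ 2)) := by
  have hlog : 0 < Real.log (1 + √2) := Real.log_pos (by simp)
  have hdouble : Tendsto (fun s : ℝ => 2 * s) (𝓝[>] 1) (𝓝[>] 2) := by
    refine tendsto_nhdsWithin_iff.mpr ⟨?_, ?_⟩
    · have : Continuous fun s : ℝ => 2 * s := by fun_prop
      simpa using tendsto_nhdsWithin_of_tendsto_nhds (s := Set.Ioi 1) (this.tendsto 1)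
    · filter_upwards [self_mem_nhdsWithin] with s (hs : 1 < s)
      exact Set.mem_Ioi.mpr (by linarith)
  have hden := tendsto_realLSeries_χ₈.mul tendsto_realLSeries_χ₈'
  have hden0 : Real.log (1 + √2) / √2 * (Real.pi / (2 * √2)) ≠ 0 := by positivity
  have hlim := ((tendsto_realLSeries_χ₈_mul_χ₈.mul tendsto_realLSeries_χ₈_mul_χ₈').mul
    (((tendsto_tprod_inv_one_sub_rpow_neg one_lt_two).comp hdouble).pow 2)).div hden hden0
  have hval : 1 / 2 * (Real.pi / 4) *
      (∏' p : {p : ℕ // p.Prime ∧ p % 8 = 5}, (1 - (p : ℝ) ^ (-2 : ℝ))⁻¹) ^ 2 /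
        (Real.log (1 + √2) / √2 * (Real.pi / (2 * √2))) =
      (1 / (2 * Real.log (1 + √2))) *
        ∏' p : {p : ℕ // p.Prime ∧ p % 8 = 5}, ((1 - ((p : ℝ) ^ 2)⁻¹)⁻¹) ^ 2 := by
    rw [← (multipliable_inv_one_sub_rpow_neg one_lt_two).tprod_pow]
    simp only [Real.rpow_neg (Nat.cast_nonneg _), Real.rpow_two]
    have h2 : √2 ^ 2 = 2 := Real.sq_sqrt zero_le_two
    field_simp
    rw [h2]
    ring
  rw [hval] at hlim
  refine hlim.congr' ?_
  filter_upwards [self_mem_nhdsWithin, hden.eventually_ne hden0] with s (hs : 1 < s) hs0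
  rw [(multipliable_inv_one_sub_rpow_neg hs).tprod_pow]
  simp only [Pi.div_apply, Function.comp_apply]
  rw [div_eq_iff hs0]
  linear_combination (s - 1) * realLSeries_mul_eq hs
end
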